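/- arXiv:1810.05545 — 8 statements merged into one kernel-verified Lean document; each statement's English description precedes it below -/
import Mathlib

section
/- (Existence of chirality for (4,1) adinkras.) For every quadruple A = (L_1,L_2,L_3,L_4) encoding a (4,1) valise adinkra, there exists a (necessarily unique) χ ∈ {1,−1} such that L_1ᵀ·L_2·L_3ᵀ·L_4 = −χ·1 and L_1·L_2ᵀ·L_3·L_4ᵀ = χ·1, where 1 is the 4×4 identity matrix. -/
open Matrix

/-- A signed permutation matrix: exactly one nonzero entry in each row and column,
that entry being `1` or `-1`. -/
def IsSignedPerm {n : ℕ} (M : Matrix (Fin n) (Fin n) ℤ) : Prop :=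
  (∀ i j, M i j = 0 ∨ M i j = 1 ∨ M i j = -1) ∧
  (∀ i, ∃! j, M i j ≠ 0) ∧
  (∀ j, ∃! i, M i j ≠ 0)

/-- The garden algebra relations for a family of `d × d` integer matrices. -/
def GardenRel {d N : ℕ} (L : Fin N → Matrix (Fin d) (Fin d) ℤ) : Prop :=
  ∀ I J : Fin N,
    (L I * (L J)ᵀ + L J * (L I)ᵀ =
      if I = J then (2 : ℤ) • (1 : Matrix (Fin d) (Fin d) ℤ) else 0) ∧
    ((L I)ᵀ * L J + (L J)ᵀ * L I =
      if I = J then (2 : ℤ) • (1 : Matrix (Fin d) (Fin d) ℤ) else 0)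

/-- The L-matrices of a (4,1) valise adinkra: a quadruple of 4×4 integer signed
permutation matrices satisfying the garden algebra relations. -/
def IsAdinkra (L : Fin 4 → Matrix (Fin 4) (Fin 4) ℤ) : Prop :=
  (∀ I, IsSignedPerm (L I)) ∧ GardenRel L

/-! Write `S = L₀ᵀL₁L₂ᵀL₃` and `U = L₀L₁ᵀL₂L₃ᵀ`. Moving `Lₖ` through the four factors of `S`
costs a sign for each of the three indices other than `k`, so `Lₖ S = -U Lₖ`, that is,
`Lₖ S Lₖᵀ = -U` for all four `k`. On the other hand, as there are as many matrices as rows, the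
garden relations imply the completeness relation `∑ₖ Lₖ X Lₖᵀ = (tr X) 1` for symmetric `X`.
Since `S` is symmetric, this gives `-4 U = (tr S) 1`; so `U = χ 1`, then `S = -L₀ᵀ U L₀ = -χ 1`,
and `χ² = 1` because `U` is orthogonal. -/

/-- A Hurwitz–Radon family: half of the garden algebra relations, for rectangular matrices over a
commutative ring. Equivalently, when `2` is regular, every combination `∑ I, x I • L I` scales the
form `v ⬝ᵥ v` by `x ⬝ᵥ x`. -/
def IsHurwitzRadon {ι m n R : Type*} [DecidableEq ι] [Fintype m] [DecidableEq n] [CommRing R]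
    (L : ι → Matrix m n R) : Prop :=
  ∀ I J, (L I)ᵀ * L J + (L J)ᵀ * L I = if I = J then (2 : R) • 1 else 0

/-- The alternating product of four matrices whose sign is the chirality. Applied to the
transposed family it is `(L 0)ᵀ * L 1 * (L 2)ᵀ * L 3`. -/
def chiralProduct {m n R : Type*} [Fintype m] [Fintype n] [CommRing R]
    (L : Fin 4 → Matrix m n R) : Matrix m m R :=
  L 0 * (L 1)ᵀ * L 2 * (L 3)ᵀ

lemma chiralProduct_transpose {m n R : Type*} [Fintype m] [Fintype n] [CommRing R]
    (L : Fin 4 → Matrix m n R) :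
    chiralProduct (fun I ↦ (L I)ᵀ) = (L 0)ᵀ * L 1 * (L 2)ᵀ * L 3 := by
  simp only [chiralProduct, transpose_transpose]

lemma eq_apply_smul_one_of_smul_eq_smul_one {n R : Type*} [DecidableEq n] [CommRing R] {c t : R}
    (hc : IsSMulRegular R c) {X : Matrix n n R} (h : c • X = t • 1) (i : n) : X = X i i • 1 := by
  have hii : c * X i i = t := by simpa using congr_fun₂ h i i
  apply hc.matrix
  simp only [h, smul_smul, hii]

namespace IsHurwitzRadon

variable {ι m n R : Type*} [Fintype m] [DecidableEq n] [CommRing R]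

section Relations

variable [DecidableEq ι] {L : ι → Matrix m n R}

lemma transpose_mul_self (h : IsHurwitzRadon L) (h2 : IsSMulRegular R (2 : R)) (I : ι) :
    (L I)ᵀ * L I = 1 :=
  h2.matrix <| by simpa only [two_smul, if_true] using h I I

lemma transpose_mul_eq_neg (h : IsHurwitzRadon L) {I J : ι} (hIJ : I ≠ J) :
    (L I)ᵀ * L J = -((L J)ᵀ * L I) :=
  eq_neg_of_add_eq_zero_left <| by simpa only [if_neg hIJ] using h I J

lemma transpose_mul_eq_ite_smul (h : IsHurwitzRadon L) (I J : ι) :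
    (L I)ᵀ * L J = (if I = J then 1 else -1 : R) • ((L J)ᵀ * L I) := by
  split_ifs with hIJ
  · rw [hIJ, one_smul]
  · rw [neg_one_smul, h.transpose_mul_eq_neg hIJ]

/-- Read entrywise, the defining relations are symmetric in the family index and the column
index. -/
lemma swap (h : IsHurwitzRadon L) : IsHurwitzRadon fun j ↦ of fun i I ↦ L I i j := by
  intro j k
  ext I J
  have hIJ := congr_fun₂ (h I J) j k
  by_cases h1 : I = J <;> by_cases h2 : j = k <;>
    simp_all [mul_apply, one_apply, mul_comm]

variable [DecidableEq m] [Fintype n]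

lemma mul_transpose_self (h : IsHurwitzRadon L) (h2 : IsSMulRegular R (2 : R))
    (hmn : Fintype.card m = Fintype.card n) (I : ι) : L I * (L I)ᵀ = 1 :=
  (mul_eq_one_comm_of_card_eq n m R hmn.symm).mp (h.transpose_mul_self h2 I)

lemma transpose (h : IsHurwitzRadon L) (h2 : IsSMulRegular R (2 : R))
    (hmn : Fintype.card m = Fintype.card n) : IsHurwitzRadon fun I ↦ (L I)ᵀ := by
  intro I J
  have hL := h.mul_transpose_self h2 hmn
  simp only [transpose_transpose]
  split_ifs with hIJ
  · rw [hIJ, hL, two_smul]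
  · calc L I * (L J)ᵀ + L J * (L I)ᵀ
        = L I * (L J)ᵀ * (L I * (L I)ᵀ) + L I * (L I)ᵀ * L J * (L I)ᵀ := by
          rw [hL, Matrix.mul_one, Matrix.one_mul]
      _ = L I * ((L J)ᵀ * L I + (L I)ᵀ * L J) * (L I)ᵀ := by
          simp only [Matrix.mul_add, Matrix.add_mul, Matrix.mul_assoc]
      _ = 0 := by rw [h J I, if_neg (Ne.symm hIJ), Matrix.mul_zero, Matrix.zero_mul]

end Relations

section Completeness

variable [Fintype ι] [DecidableEq ι] [DecidableEq m] [Fintype n] {L : ι → Matrix m n R}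

lemma sum_mul_mul_transpose (h : IsHurwitzRadon L) (h2 : IsSMulRegular R (2 : R))
    (hm : Fintype.card m = Fintype.card ι) {X : Matrix n n R} (hX : X.IsSymm) :
    ∑ I, L I * X * (L I)ᵀ = X.trace • 1 := by
  let M : n → Matrix m ι R := fun j ↦ of fun i I ↦ L I i j
  have hM : IsHurwitzRadon fun j ↦ (M j)ᵀ := h.swap.transpose h2 hm
  have hsum : ∑ I, L I * X * (L I)ᵀ = ∑ i, ∑ j, X i j • (M i * (M j)ᵀ) := by
    ext a b
    simp only [Matrix.sum_apply, Matrix.smul_apply, mul_apply, transpose_apply, of_apply, M,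
      Finset.sum_mul, Finset.mul_sum, smul_eq_mul]
    calc ∑ I, ∑ j, ∑ i, L I a i * X i j * L I b j
        = ∑ i, ∑ j, ∑ I, L I a i * X i j * L I b j := by
          rw [Finset.sum_comm, Finset.sum_comm_cycle]
      _ = ∑ i, ∑ j, ∑ I, X i j * (L I a i * L I b j) := by
          simp only [mul_left_comm, mul_assoc]
  have hsum' : ∑ I, L I * X * (L I)ᵀ = ∑ i, ∑ j, X i j • (M j * (M i)ᵀ) := by
    rw [hsum, Finset.sum_comm]
    simp only [hX.apply]
  apply h2.matrix
  calc (2 : R) • ∑ I, L I * X * (L I)ᵀ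
      = ∑ i, ∑ j, X i j • (M i * (M j)ᵀ + M j * (M i)ᵀ) := by
        simp only [two_smul, smul_add, Finset.sum_add_distrib, ← hsum, ← hsum']
    _ = ∑ i, ∑ j, X i j • (if i = j then (2 : R) • 1 else 0) := by
        refine Finset.sum_congr rfl fun i _ ↦ Finset.sum_congr rfl fun j _ ↦ ?_
        rw [← hM i j, transpose_transpose, transpose_transpose]
    _ = (2 : R) • X.trace • 1 := by
        simp [trace, Finset.sum_smul, Finset.smul_sum, smul_comm (2 : R)]

end Completeness

section Chirality

variable [DecidableEq m] [Fintype n] {L : Fin 4 → Matrix m n R}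

lemma isSymm_chiralProduct (h : IsHurwitzRadon L)
    (hT : IsHurwitzRadon fun I ↦ (L I)ᵀ) : (chiralProduct L).IsSymm := by
  have hl {I J} (hIJ : I ≠ J) : (L I)ᵀ * L J = -((L J)ᵀ * L I) := h.transpose_mul_eq_neg hIJ
  have hr {I J} (hIJ : I ≠ J) : L I * (L J)ᵀ = -(L J * (L I)ᵀ) := by
    simpa only [transpose_transpose] using hT.transpose_mul_eq_neg hIJ
  calc (chiralProduct L)ᵀ = L 3 * ((L 2)ᵀ * L 1) * (L 0)ᵀ := by
        simp only [chiralProduct, transpose_mul, transpose_transpose, Matrix.mul_assoc]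
    _ = -((L 3 * (L 1)ᵀ) * (L 2 * (L 0)ᵀ)) := by
        rw [hl (show (2 : Fin 4) ≠ 1 by decide)]
        simp only [Matrix.mul_neg, Matrix.neg_mul, Matrix.mul_assoc]
    _ = -(L 1 * ((L 3)ᵀ * L 0) * (L 2)ᵀ) := by
        rw [hr (show (3 : Fin 4) ≠ 1 by decide), hr (show (2 : Fin 4) ≠ 0 by decide)]
        simp only [Matrix.mul_neg, Matrix.neg_mul, neg_neg, Matrix.mul_assoc]
    _ = (L 1 * (L 0)ᵀ) * (L 3 * (L 2)ᵀ) := by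
        rw [hl (show (3 : Fin 4) ≠ 0 by decide)]
        simp only [Matrix.mul_neg, Matrix.neg_mul, neg_neg, Matrix.mul_assoc]
    _ = chiralProduct L := by
        rw [hr (show (1 : Fin 4) ≠ 0 by decide), hr (show (3 : Fin 4) ≠ 2 by decide)]
        simp only [Matrix.mul_neg, Matrix.neg_mul, neg_neg, Matrix.mul_assoc, chiralProduct]

lemma mul_chiralProduct_transpose (h : IsHurwitzRadon L)
    (hT : IsHurwitzRadon fun I ↦ (L I)ᵀ) (k : Fin 4) :
    L k * chiralProduct (fun I ↦ (L I)ᵀ) = -(chiralProduct L * L k) := by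
  let s : Fin 4 → R := fun j ↦ if k = j then 1 else -1
  have hs (j) : (L k)ᵀ * L j = s j • ((L j)ᵀ * L k) := h.transpose_mul_eq_ite_smul k j
  have hsT (j) : L k * (L j)ᵀ = s j • (L j * (L k)ᵀ) := by
    simpa only [transpose_transpose] using hT.transpose_mul_eq_ite_smul k j
  have hprod : s 0 * s 1 * s 2 * s 3 = -1 := by fin_cases k <;> simp [s]
  calc L k * chiralProduct (fun I ↦ (L I)ᵀ)
      = L k * (L 0)ᵀ * L 1 * (L 2)ᵀ * L 3 := by
        simp only [chiralProduct, transpose_transpose, Matrix.mul_assoc]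
    _ = s 0 • (L 0 * ((L k)ᵀ * L 1) * (L 2)ᵀ * L 3) := by
        simp only [hsT 0, Matrix.smul_mul, Matrix.mul_assoc]
    _ = (s 0 * s 1) • (L 0 * (L 1)ᵀ * (L k * (L 2)ᵀ) * L 3) := by
        simp only [hs 1, Matrix.smul_mul, Matrix.mul_smul, smul_smul, Matrix.mul_assoc]
    _ = (s 0 * s 1 * s 2) • (L 0 * (L 1)ᵀ * L 2 * ((L k)ᵀ * L 3)) := by
        simp only [hsT 2, Matrix.smul_mul, Matrix.mul_smul, smul_smul, Matrix.mul_assoc]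
    _ = (s 0 * s 1 * s 2 * s 3) • (chiralProduct L * L k) := by
        simp only [hs 3, Matrix.mul_smul, smul_smul, chiralProduct, Matrix.mul_assoc]
    _ = -(chiralProduct L * L k) := by rw [hprod, neg_one_smul]

lemma transpose_chiralProduct_mul_self (h : IsHurwitzRadon L)
    (hT : IsHurwitzRadon fun I ↦ (L I)ᵀ) (h2 : IsSMulRegular R (2 : R)) :
    (chiralProduct L)ᵀ * chiralProduct L = 1 := by
  have hl := h.transpose_mul_self h2
  have hr (I) : L I * (L I)ᵀ = 1 := by
    simpa only [transpose_transpose] using hT.transpose_mul_self h2 I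
  calc (chiralProduct L)ᵀ * chiralProduct L
      = L 3 * ((L 2)ᵀ * (L 1 * ((L 0)ᵀ * L 0) * (L 1)ᵀ) * L 2) * (L 3)ᵀ := by
        simp only [chiralProduct, transpose_mul, transpose_transpose, Matrix.mul_assoc]
    _ = 1 := by simp only [hl, hr, Matrix.mul_one]

lemma four_smul_chiralProduct (h : IsHurwitzRadon L)
    (h2 : IsSMulRegular R (2 : R)) (hm : Fintype.card m = 4) (hn : Fintype.card n = 4) :
    (4 : R) • chiralProduct L = -(chiralProduct fun I ↦ (L I)ᵀ).trace • 1 := by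
  have hT := h.transpose h2 (hm.trans hn.symm)
  have hr := h.mul_transpose_self h2 (hm.trans hn.symm)
  have hconj (k) : L k * chiralProduct (fun I ↦ (L I)ᵀ) * (L k)ᵀ = -chiralProduct L := by
    rw [h.mul_chiralProduct_transpose hT, Matrix.neg_mul, Matrix.mul_assoc, hr, Matrix.mul_one]
  have hsymm : (chiralProduct fun I ↦ (L I)ᵀ).IsSymm := hT.isSymm_chiralProduct h
  rw [neg_smul, ← h.sum_mul_mul_transpose h2 (hm.trans (Fintype.card_fin 4).symm) hsymm,
    Finset.sum_congr rfl fun k _ ↦ hconj k, Finset.sum_const, Finset.card_univ, Fintype.card_fin,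
    smul_neg, neg_neg, ofNat_smul_eq_nsmul]

lemma exists_chiralProduct_eq_smul_one (h : IsHurwitzRadon L) (h2 : IsSMulRegular R (2 : R))
    (hm : Fintype.card m = 4) (hn : Fintype.card n = 4) : ∃ χ : R, chiralProduct L = χ • 1 := by
  have h4 : IsSMulRegular R (4 : R) := by
    simpa only [← two_add_two_eq_four, ← two_mul] using h2.mul h2
  obtain ⟨i⟩ : Nonempty m := Fintype.card_pos_iff.mp (by omega)
  exact ⟨_, eq_apply_smul_one_of_smul_eq_smul_one h4 (h.four_smul_chiralProduct h2 hm hn) i⟩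

lemma chiralProduct_transpose_eq_neg_smul_one (h : IsHurwitzRadon L)
    (hT : IsHurwitzRadon fun I ↦ (L I)ᵀ) (h2 : IsSMulRegular R (2 : R)) {χ : R}
    (hχ : chiralProduct L = χ • 1) : chiralProduct (fun I ↦ (L I)ᵀ) = -(χ • 1) := by
  have hl := h.transpose_mul_self h2 0
  calc chiralProduct (fun I ↦ (L I)ᵀ)
      = (L 0)ᵀ * (L 0 * chiralProduct fun I ↦ (L I)ᵀ) := by
        rw [← Matrix.mul_assoc, hl, Matrix.one_mul]
    _ = -(χ • 1) := by
        rw [h.mul_chiralProduct_transpose hT, hχ, Matrix.smul_mul, Matrix.one_mul,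
          Matrix.mul_neg, Matrix.mul_smul, hl]

lemma eq_one_or_eq_neg_one_of_chiralProduct_eq [Nonempty m] [NoZeroDivisors R]
    (h : IsHurwitzRadon L) (hT : IsHurwitzRadon fun I ↦ (L I)ᵀ) (h2 : IsSMulRegular R (2 : R))
    {χ : R} (hχ : chiralProduct L = χ • 1) : χ = 1 ∨ χ = -1 := by
  have hsq := h.transpose_chiralProduct_mul_self hT h2
  rw [hχ, transpose_smul, transpose_one, Matrix.smul_mul, Matrix.one_mul, smul_smul] at hsq
  obtain ⟨i⟩ := ‹Nonempty m›
  exact mul_self_eq_one_iff.mp <| by simpa using congr_fun₂ hsq i i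

end Chirality

end IsHurwitzRadon

theorem stmt3_general {m n R : Type*} [Fintype m] [DecidableEq m] [Fintype n] [DecidableEq n]
    [CommRing R] [IsDomain R] [NeZero (2 : R)] (hm : Fintype.card m = 4) (hn : Fintype.card n = 4)
    {L : Fin 4 → Matrix m n R} (hL : IsHurwitzRadon L) :
    ∃! χ : R, (χ = 1 ∨ χ = -1) ∧
      (L 0)ᵀ * L 1 * (L 2)ᵀ * L 3 = -(χ • (1 : Matrix n n R)) ∧
      L 0 * (L 1)ᵀ * L 2 * (L 3)ᵀ = χ • (1 : Matrix m m R) := by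
  have h2 : IsSMulRegular R (2 : R) := .of_ne_zero two_ne_zero
  have hT := hL.transpose h2 (hm.trans hn.symm)
  have : Nonempty m := Fintype.card_pos_iff.mp (by omega)
  obtain ⟨χ, hχ⟩ := hL.exists_chiralProduct_eq_smul_one h2 hm hn
  rw [← chiralProduct_transpose]
  refine ⟨χ, ⟨?_, ?_, hχ⟩, fun ψ ⟨_, _, hψ⟩ ↦ ?_⟩
  · exact hL.eq_one_or_eq_neg_one_of_chiralProduct_eq hT h2 hχ
  · exact hL.chiralProduct_transpose_eq_neg_smul_one hT h2 hχ
  · exact smul_left_injective R one_ne_zero (hψ.symm.trans hχ)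

theorem stmt3 (L : Fin 4 → Matrix (Fin 4) (Fin 4) ℤ) (hL : IsAdinkra L) :
    ∃! χ : ℤ, (χ = 1 ∨ χ = -1) ∧
      (L 0)ᵀ * L 1 * (L 2)ᵀ * L 3 = -(χ • (1 : Matrix (Fin 4) (Fin 4) ℤ)) ∧
      L 0 * (L 1)ᵀ * L 2 * (L 3)ᵀ = χ • (1 : Matrix (Fin 4) (Fin 4) ℤ) :=
  stmt3_general (Fintype.card_fin 4) (Fintype.card_fin 4) fun I J ↦ (hL.2 I J).2
end

section
/- Let A = (L_1,L_2,L_3,L_4) encode a (4,1) valise adinkra with chirality χ, i.e., L_1ᵀ·L_2·L_3ᵀ·L_4 = −χ·1 with χ ∈ {1,−1}. Then L_1ᵀ·L_2 = χ·(L_3ᵀ·L_4), L_1ᵀ·L_3 = −χ·(L_2ᵀ·L_4), and L_1ᵀ·L_4 = χ·(L_2ᵀ·L_3). -/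
open Matrix

/-
The matrices `L_I` are orthogonal, so transposition inverts them and `L_Iᵀ L_J` is the quotient
`L_I⁻¹ L_J` of two units. For `I ≠ J` the garden algebra says that this quotient is the negative of
its inverse; conjugating by `L_I`, the same holds for `L_J L_I⁻¹`. Hence exchanging the two middle
indices of the chirality product `(L_1⁻¹ L_2)(L_3⁻¹ L_4)`, or the two indices of its right factor,
only changes its sign, and each reordered product is solved for its left factor by inverting the
right one.
-/

/-- The garden algebra relation between two distinct members of a family of units: `a⁻¹ b` is the
negative of its inverse. For orthogonal matrices, whose inverse is the transpose, this is
`aᵀ b + bᵀ a = 0`. -/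
def GardenPair {G : Type*} [Group G] [HasDistribNeg G] (a b : G) : Prop :=
  a⁻¹ * b = -(b⁻¹ * a)

namespace GardenPair

variable {G : Type*} [Group G] [HasDistribNeg G] {a b : G}

theorem symm (h : GardenPair a b) : GardenPair b a :=
  (neg_eq_iff_eq_neg.mpr h).symm

theorem inv_inv_mul (h : GardenPair a b) : (a⁻¹ * b)⁻¹ = -(a⁻¹ * b) := by
  rw [_root_.mul_inv_rev, inv_inv, h.symm]

theorem mul_inv_eq_neg (h : GardenPair a b) : a * b⁻¹ = -(b * a⁻¹) :=
  calc a * b⁻¹ = a * (b⁻¹ * a) * a⁻¹ := by group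
    _ = a * -(a⁻¹ * b) * a⁻¹ := by rw [h.symm]
    _ = -(b * a⁻¹) := by rw [mul_neg, mul_inv_cancel_left, neg_mul]

theorem mul_swap_middle (h : GardenPair a b) (x y : G) :
    x * a * (b⁻¹ * y) = -(x * b * (a⁻¹ * y)) :=
  calc x * a * (b⁻¹ * y) = x * (a * b⁻¹) * y := by group
    _ = -(x * (b * a⁻¹) * y) := by rw [h.mul_inv_eq_neg, mul_neg, neg_mul]
    _ = -(x * b * (a⁻¹ * y)) := by group

theorem eq_neg_mul_of_mul_eq (h : GardenPair a b) {x y : G} (hxy : x * (a⁻¹ * b) = y) :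
    x = -(y * (a⁻¹ * b)) := by
  rw [eq_mul_inv_of_mul_eq hxy, h.inv_inv_mul, mul_neg]

end GardenPair

theorem stmt4_general {M : Type*} [Monoid M] [HasDistribNeg M] {a b c d : Mˣ}
    (hbc : GardenPair b c) (hbd : GardenPair b d) (hcd : GardenPair c d) {χ : M}
    (hχ : ↑(a⁻¹ * b * c⁻¹ * d) = -χ) :
    ↑(a⁻¹ * b) = χ * ↑(c⁻¹ * d) ∧
    ↑(a⁻¹ * c) = -(χ * ↑(b⁻¹ * d)) ∧
    ↑(a⁻¹ * d) = χ * ↑(b⁻¹ * c) := by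
  -- `-χ` is a product of units, so everything takes place in the group of units.
  obtain ⟨χ, rfl⟩ : ∃ ε : Mˣ, ↑ε = χ :=
    ⟨-(a⁻¹ * b * c⁻¹ * d), by rw [Units.val_neg, hχ, neg_neg]⟩
  norm_cast at hχ ⊢
  have h_bcd : a⁻¹ * b * (c⁻¹ * d) = -χ := by rw [← mul_assoc, hχ]
  have h_cbd : a⁻¹ * c * (b⁻¹ * d) = χ := by rw [hbc.symm.mul_swap_middle, h_bcd, neg_neg]
  have h_dbc : a⁻¹ * d * (b⁻¹ * c) = -χ := by
    rw [hbd.symm.mul_swap_middle, hcd.symm, mul_neg, neg_neg, h_bcd]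
  refine ⟨?_, hbd.eq_neg_mul_of_mul_eq h_cbd, ?_⟩
  · rw [hcd.eq_neg_mul_of_mul_eq h_bcd, neg_mul, neg_neg]
  · rw [hbc.eq_neg_mul_of_mul_eq h_dbc, neg_mul, neg_neg]

namespace GardenRel

variable {d N : ℕ} {L : Fin N → Matrix (Fin d) (Fin d) ℤ}

theorem transpose_mul_self (h : GardenRel L) (I : Fin N) : (L I)ᵀ * L I = 1 := by
  have h_two : (2 : ℤ) • ((L I)ᵀ * L I) = (2 : ℤ) • 1 := by
    simpa only [two_smul, if_true] using (h I I).2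
  exact smul_right_injective _ two_ne_zero h_two

/-- The members of a garden family as units of the matrix ring, with inverse the transpose. -/
def unit (h : GardenRel L) (I : Fin N) : (Matrix (Fin d) (Fin d) ℤ)ˣ where
  val := L I
  inv := (L I)ᵀ
  val_inv := mul_eq_one_comm.mp (h.transpose_mul_self I)
  inv_val := h.transpose_mul_self I

theorem val_inv_unit_mul_unit (h : GardenRel L) (I J : Fin N) :
    ↑((h.unit I)⁻¹ * h.unit J) = (L I)ᵀ * L J :=
  rfl

theorem gardenPair_unit (h : GardenRel L) {I J : Fin N} (hIJ : I ≠ J) :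
    GardenPair (h.unit I) (h.unit J) := by
  have h_add : (L I)ᵀ * L J + (L J)ᵀ * L I = 0 := by simpa only [if_neg hIJ] using (h I J).2
  refine Units.ext ?_
  rw [Units.val_neg, h.val_inv_unit_mul_unit, h.val_inv_unit_mul_unit]
  exact eq_neg_of_add_eq_zero_left h_add

end GardenRel

theorem stmt4 (L : Fin 4 → Matrix (Fin 4) (Fin 4) ℤ) (hL : IsAdinkra L)
    (χ : ℤ) (hχ : χ = 1 ∨ χ = -1)
    (hchir : (L 0)ᵀ * L 1 * (L 2)ᵀ * L 3 = -(χ • (1 : Matrix (Fin 4) (Fin 4) ℤ))) :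
    (L 0)ᵀ * L 1 = χ • ((L 2)ᵀ * L 3) ∧
    (L 0)ᵀ * L 2 = -(χ • ((L 1)ᵀ * L 3)) ∧
    (L 0)ᵀ * L 3 = χ • ((L 1)ᵀ * L 2) := by
  have h := hL.2
  simpa only [h.val_inv_unit_mul_unit, smul_mul_assoc, one_mul] using
    stmt4_general (a := h.unit 0) (h.gardenPair_unit (I := 1) (J := 2) (by decide))
      (h.gardenPair_unit (I := 1) (J := 3) (by decide))
      (h.gardenPair_unit (I := 2) (J := 3) (by decide)) hchir
end

section
/- Let V = ZMod 2 × ZMod 2 and let (σ_0,σ_1,σ_2,σ_3) be a quadruple of permutations of V such that for all I ≠ J the permutation σ_J ∘ σ_I⁻¹ is a fixed-point-free involution. Then there exists a unique pair (ρ_B, ρ_F) of permutations of V with ρ_F((0,0)) = (0,0) such that σ_I = ρ_F ∘ σ⁰_I ∘ ρ_B⁻¹ for all I ∈ {0,1,2,3}, where σ⁰_I(v) = v + t(I) is the standard chromotopology. -/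
/-- Labels of the four colors by elements of `ZMod 2 × ZMod 2`. -/
def tEnum : Fin 4 → ZMod 2 × ZMod 2 := ![(0, 0), (0, 1), (1, 0), (1, 1)]

/-- The quadruple of permutations encoding a labeled (4,1) chromotopology:
for all distinct colors `I, J`, the permutation `σ_J ∘ σ_I⁻¹` is a
fixed-point-free involution. -/
def IsChromo {V : Type*} (σ : Fin 4 → Equiv.Perm V) : Prop :=
  ∀ I J : Fin 4, I ≠ J →
    (σ J * (σ I)⁻¹) * (σ J * (σ I)⁻¹) = 1 ∧ ∀ v : V, (σ J * (σ I)⁻¹) v ≠ v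

/-!
Going back along the edge of color `0` and forth along the edge of color `v` is a permutation `p v`
of the fermions. At each fermion these permutations reach every fermion exactly once, and each is an
involution; for distinct nonzero `u` and `v` this rules out the values `y`, `p u y` and `p v y` for
`p u (p v y)`, which leaves only `p (v + u) y`. Thus the Klein four-group acts simply transitively
on the fermions, and `ρ_F` has to be the orbit map of the base point.
-/

open Equiv Function

section Transition

variable {G X : Type*}

/-- The permutation of the fermions that goes back along the edge of color `0` and then forth along
the edge of color `v`, where the colors are labeled by `G`. -/
def transition [Zero G] (τ : G → Perm X) (v : G) : Perm X := τ v * (τ 0)⁻¹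

theorem transition_zero [Zero G] (τ : G → Perm X) : transition τ 0 = 1 :=
  mul_inv_cancel (τ 0)

theorem transition_apply_apply_zero [Zero G] (τ : G → Perm X) (v : G) (b : X) :
    transition τ v (τ 0 b) = τ v b :=
  congr_arg (τ v) ((τ 0).symm_apply_apply b)

theorem transition_apply_of_eq_addRight [AddGroup G] {τ : G → Perm X} {b f : G ≃ X}
    (h : ∀ u, τ u = (b.symm.trans (Equiv.addRight u)).trans f) (u v : G) :
    transition τ u (f v) = f (v + u) := by
  have τ_apply (w : G) : τ w (b v) = f (v + w) := by simp [h w]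
  rw [← τ_apply u, ← transition_apply_apply_zero τ u, τ_apply 0, add_zero]

theorem existsUnique_eq_addRight_of_transition [AddGroup G] {τ : G → Perm X} {x : X}
    (hbij : Bijective fun v => transition τ v x)
    (hadd : ∀ u v, transition τ u (transition τ v x) = transition τ (v + u) x) :
    ∃! ρ : (G ≃ X) × (G ≃ X),
      ρ.2 0 = x ∧ ∀ u, τ u = (ρ.1.symm.trans (Equiv.addRight u)).trans ρ.2 := by
  let orbit : G ≃ X := Equiv.ofBijective _ hbij
  refine ⟨(orbit.trans (τ 0)⁻¹, orbit), ⟨?_, fun u => ?_⟩, ?_⟩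
  · change transition τ 0 x = x
    rw [transition_zero, Perm.one_apply]
  · ext b
    obtain ⟨v, hv : orbit v = τ 0 b⟩ := orbit.surjective (τ 0 b)
    calc
      τ u b = transition τ u (τ 0 b) := (transition_apply_apply_zero τ u b).symm
      _ = transition τ u (orbit v) := by rw [hv]
      _ = orbit (v + u) := hadd u v
      _ = orbit (orbit.symm (τ 0 b) + u) := by rw [← hv, orbit.symm_apply_apply]
  · rintro ⟨b, f⟩ ⟨hf : f 0 = x, h⟩
    have hf_orbit : f = orbit := by
      ext v
      calc
        f v = transition τ v (f 0) := by rw [transition_apply_of_eq_addRight h, zero_add]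
        _ = orbit v := by rw [hf]; rfl
    have hb : b = f.trans (τ 0)⁻¹ := by
      ext v
      rw [Equiv.trans_apply, Perm.eq_inv_iff_eq, h 0]
      simp
    rw [hb, hf_orbit]

end Transition

theorem apply_apply_eq_apply_add_of_involutive {G X : Type*} [AddGroup G] [IsAddKleinFour G]
    {p : G → X → X} (hzero : ∀ y, p 0 y = y) (hinv : ∀ v, Involutive (p v))
    (hbij : ∀ y, Bijective fun v => p v y) (u v : G) (y : X) : p u (p v y) = p (v + u) y := by
  have eq_zero_of_fixed {w : G} {z : X} (h : p w z = z) : w = 0 :=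
    (hbij z).injective (h.trans (hzero z).symm)
  obtain rfl | huv := eq_or_ne u v
  · rw [hinv u y, IsAddKleinFour.add_self, hzero]
  obtain rfl | hu := eq_or_ne u 0
  · rw [hzero, add_zero]
  obtain rfl | hv := eq_or_ne v 0
  · rw [hzero, zero_add]
  obtain ⟨w, hw : p w y = p u (p v y)⟩ := (hbij y).surjective (p u (p v y))
  have hw_zero : w ≠ 0 := by
    rintro rfl
    refine huv ((hbij y).injective ?_)
    rw [← hinv u (p v y), ← hw, hzero]
  have hw_left : w ≠ u := by
    rintro rfl
    exact hv (eq_zero_of_fixed ((hinv w).injective hw).symm)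
  have hw_right : w ≠ v := by
    rintro rfl
    exact hu (eq_zero_of_fixed hw.symm)
  rw [← hw, IsAddKleinFour.eq_add_of_ne_all hv hu huv.symm hw_zero hw_right hw_left]

namespace IsChromo

variable {G X : Type*} {σ : Fin 4 → Perm X}

theorem involutive_transition [Zero G] (hσ : IsChromo σ) (t : Fin 4 ≃ G) (v : G) :
    Involutive (transition (σ ∘ t.symm) v) := by
  obtain rfl | hv := eq_or_ne v 0
  · rw [transition_zero]
    exact fun _ => rfl
  · exact Equiv.congr_fun (hσ _ _ (t.symm.injective.ne hv.symm)).1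

theorem injective_transition [Zero G] (hσ : IsChromo σ) (t : Fin 4 ≃ G) (y : X) :
    Injective fun v => transition (σ ∘ t.symm) v y := by
  intro u v huv
  by_contra hne
  have h_step : (σ (t.symm v) * (σ (t.symm u))⁻¹) (transition (σ ∘ t.symm) u y) =
      transition (σ ∘ t.symm) v y := by
    simp [transition]
  exact (hσ _ _ (t.symm.injective.ne hne)).2 _ (h_step.trans huv.symm)

theorem bijective_transition [Zero G] (hσ : IsChromo σ) (t : Fin 4 ≃ G) (hX : Nat.card X = 4)
    (y : X) : Bijective fun v => transition (σ ∘ t.symm) v y := by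
  have : Finite X := Nat.finite_of_card_ne_zero (by lia)
  refine (hσ.injective_transition t y).bijective_of_nat_card_le ?_
  rw [hX, ← Nat.card_congr t, Nat.card_fin]

end IsChromo

theorem stmt6_general {G X : Type*} [AddGroup G] [IsAddKleinFour G] (t : Fin 4 ≃ G)
    (hX : Nat.card X = 4) (x : X) {σ : Fin 4 → Perm X} (hσ : IsChromo σ) :
    ∃! ρ : (G ≃ X) × (G ≃ X),
      ρ.2 0 = x ∧ ∀ I, σ I = (ρ.1.symm.trans (Equiv.addRight (t I))).trans ρ.2 := by
  have hbij := hσ.bijective_transition t hX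
  have hadd (u v : G) := apply_apply_eq_apply_add_of_involutive
    (fun y => by rw [transition_zero, Perm.one_apply]) (hσ.involutive_transition t) hbij u v x
  simpa only [t.forall_congr_left, t.apply_symm_apply, comp_apply] using
    existsUnique_eq_addRight_of_transition (hbij x) hadd

theorem tEnum_bijective : Bijective tEnum := by
  unfold tEnum
  decide

theorem stmt6 (σ : Fin 4 → Equiv.Perm (ZMod 2 × ZMod 2)) (hσ : IsChromo σ) :
    ∃! ρ : Equiv.Perm (ZMod 2 × ZMod 2) × Equiv.Perm (ZMod 2 × ZMod 2),
      ρ.2 (0, 0) = (0, 0) ∧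
      ∀ I : Fin 4, σ I = ρ.2 * (Equiv.addRight (tEnum I)) * ρ.1⁻¹ :=
  stmt6_general (Equiv.ofBijective tEnum tEnum_bijective) (by simp) (0, 0) hσ
end

section
/- The number of quadruples (σ_0,σ_1,σ_2,σ_3) of permutations of a 4-element set such that for all I ≠ J the permutation σ_J ∘ σ_I⁻¹ is a fixed-point-free involution is exactly 144. (Equivalently, there are exactly 144 labeled (4,1) chromotopologies.) -/
/-!
On four points, the fixed-point-free involutions are the non-identity elements of the Klein
four-group `K`. So the permutations `σ_J ∘ σ_I⁻¹` are all fixed-point-free involutions exactly when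
the `σ_I` are pairwise distinct elements of a single right coset of `K`. There are `24 / 4 = 6`
cosets, and each is enumerated by four colors in `4! = 24` ways.
-/

open Equiv

section Cosets

variable {G ι : Type*} [Group G]

/-- The families of pairwise distinct elements of a single right coset of `H`, expressed through the
quotients `σ j * (σ i)⁻¹`. -/
def IsCosetArrangement (H : Subgroup G) (σ : ι → G) : Prop :=
  Pairwise fun i j ↦ σ j * (σ i)⁻¹ ∈ H ∧ σ j * (σ i)⁻¹ ≠ 1

variable {H : Subgroup G}

theorem IsCosetArrangement.injective {σ : ι → G} (hσ : IsCosetArrangement H σ) :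
    Function.Injective σ := by
  intro i j hij
  by_contra hne
  exact (hσ hne).2 (mul_inv_eq_one.mpr hij.symm)

theorem IsCosetArrangement.mk_eq_mk {σ : ι → G} (hσ : IsCosetArrangement H σ) (i j : ι) :
    (Quotient.mk'' (σ i) : Quotient (QuotientGroup.rightRel H)) = Quotient.mk'' (σ j) := by
  obtain rfl | hij := eq_or_ne i j
  · rfl
  · exact Quotient.sound' (QuotientGroup.rightRel_apply.mpr (hσ hij).1)

theorem isCosetArrangement_embedding_mul (e : ι ↪ H) (g : G) :
    IsCosetArrangement H fun i ↦ (e i : G) * g := by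
  intro i j hij
  have hquot : (e j : G) * g * ((e i : G) * g)⁻¹ = (e j * (e i)⁻¹ : H) := by simp
  rw [hquot]
  refine ⟨SetLike.coe_mem _, fun h ↦ hij (e.injective ?_)⟩
  exact (mul_inv_eq_one.mp (Subtype.ext h)).symm

theorem mk_mul_eq_of_mem {h : G} (hh : h ∈ H) (g : G) :
    (Quotient.mk'' (h * g) : Quotient (QuotientGroup.rightRel H)) = Quotient.mk'' g :=
  Quotient.sound' (QuotientGroup.rightRel_apply.mpr (by simpa using hh))

theorem mul_out_inv_mem_of_mk_eq {g : G} {q : Quotient (QuotientGroup.rightRel H)}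
    (hg : Quotient.mk'' g = q) : g * q.out⁻¹ ∈ H :=
  QuotientGroup.rightRel_apply.mp (Quotient.exact' (q.out_eq'.trans hg.symm))

variable (H ι) in
/-- An arrangement is a right coset together with an arrangement in `H`, by right translation
with the chosen representative of the coset. -/
noncomputable def cosetArrangementEquiv [Nonempty ι] :
    {σ : ι → G // IsCosetArrangement H σ} ≃ Quotient (QuotientGroup.rightRel H) × (ι ↪ H) where
  toFun σ :=
    let q : Quotient (QuotientGroup.rightRel H) := Quotient.mk'' (σ.1 (Classical.arbitrary ι))
    (q, ⟨fun i ↦ ⟨σ.1 i * q.out⁻¹, mul_out_inv_mem_of_mk_eq (σ.2.mk_eq_mk i _)⟩,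
      fun _ _ hij ↦ σ.2.injective (mul_right_cancel (congrArg Subtype.val hij))⟩)
  invFun x := ⟨fun i ↦ x.2 i * x.1.out, isCosetArrangement_embedding_mul x.2 x.1.out⟩
  left_inv σ := by
    ext i
    exact inv_mul_cancel_right _ _
  right_inv x := by
    have hq : (Quotient.mk'' (x.2 (Classical.arbitrary ι) * x.1.out) :
        Quotient (QuotientGroup.rightRel H)) = x.1 :=
      (mk_mul_eq_of_mem (SetLike.coe_mem _) _).trans x.1.out_eq'
    refine Prod.ext hq ?_
    ext i
    simp [hq]

theorem card_quotient_rightRel_eq_index :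
    Nat.card (Quotient (QuotientGroup.rightRel H)) = H.index :=
  Nat.card_congr (QuotientGroup.quotientRightRelEquivQuotientLeftRel H)

theorem card_isCosetArrangement [Nonempty ι] [Finite ι] [Finite H] :
    Nat.card {σ : ι → G // IsCosetArrangement H σ} =
      H.index * (Nat.card H).descFactorial (Nat.card ι) := by
  have := Fintype.ofFinite ι
  have := Fintype.ofFinite H
  have hemb : Nat.card (ι ↪ H) = (Nat.card H).descFactorial (Nat.card ι) := by
    classical simp only [Nat.card_eq_fintype_card, Fintype.card_embedding_eq]
  rw [Nat.card_congr (cosetArrangementEquiv ι H), Nat.card_prod,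
    card_quotient_rightRel_eq_index, hemb]

end Cosets

section FreeInvolutions

variable {V : Type*}

/-- Fixed-point-free involutions, in the form in which they occur in `IsChromo`. -/
def IsFreeInvolution (τ : Perm V) : Prop :=
  τ * τ = 1 ∧ ∀ v : V, τ v ≠ v

variable [Fintype V] [DecidableEq V]

theorem pow_prime_eq_one_and_forall_apply_ne_iff_cycleType {p n : ℕ} [Fact p.Prime]
    (hV : Nat.card V = n * p) {τ : Perm V} :
    (τ ^ p = 1 ∧ ∀ v, τ v ≠ v) ↔ τ.cycleType = Multiset.replicate n p := by
  have hp : 0 < p := (Fact.out : p.Prime).pos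
  have hfree : (∀ v, τ v ≠ v) ↔ τ.cycleType.sum = n * p := by
    rw [Perm.sum_cycleType, ← hV, Nat.card_eq_fintype_card, Finset.card_eq_iff_eq_univ,
      Finset.eq_univ_iff_forall]
    simp only [Perm.mem_support]
  rw [hfree, Perm.pow_prime_eq_one_iff, ← Multiset.eq_replicate_card]
  constructor
  · rintro ⟨hrep, hsum⟩
    rw [hrep, Multiset.sum_replicate, smul_eq_mul] at hsum
    rw [hrep, Nat.eq_of_mul_eq_mul_right hp hsum]
  · intro h
    simp [h]

variable (V) in
/-- The Klein four-group as a group of permutations (it is one when `V` has four elements);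
Mathlib has it as a subgroup of the alternating group. -/
def permKleinFour : Subgroup (Perm V) :=
  (alternatingGroup.kleinFour V).map (alternatingGroup V).subtype

theorem mem_permKleinFour_iff (hV : Nat.card V = 4) {τ : Perm V} :
    τ ∈ permKleinFour V ↔ τ = 1 ∨ τ.cycleType = {2, 2} := by
  have hmem (g : alternatingGroup V) :
      g ∈ alternatingGroup.kleinFour V ↔ (g : Perm V) = 1 ∨ (g : Perm V).cycleType = {2, 2} := by
    rw [← SetLike.mem_coe, alternatingGroup.coe_kleinFour_of_card_eq_four hV]
    simp
  simp only [permKleinFour, Subgroup.mem_map, Subgroup.coe_subtype, hmem]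
  constructor
  · rintro ⟨g, hg, rfl⟩
    exact hg
  · intro hτ
    refine ⟨⟨τ, ?_⟩, hτ, rfl⟩
    rcases hτ with rfl | hτ
    · exact one_mem _
    · norm_num [Perm.mem_alternatingGroup, Perm.sign_of_cycleType, hτ]

theorem isFreeInvolution_iff_mem_permKleinFour (hV : Nat.card V = 4) {τ : Perm V} :
    IsFreeInvolution τ ↔ τ ∈ permKleinFour V ∧ τ ≠ 1 := by
  have hcycle : IsFreeInvolution τ ↔ τ.cycleType = {2, 2} := by
    rw [IsFreeInvolution, ← pow_two]
    exact pow_prime_eq_one_and_forall_apply_ne_iff_cycleType (n := 2) hV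
  rw [hcycle, mem_permKleinFour_iff hV]
  have hne : τ.cycleType = {2, 2} → τ ≠ 1 := by
    rintro h rfl
    simp at h
  tauto

theorem card_permKleinFour (hV : Nat.card V = 4) : Nat.card (permKleinFour V) = 4 := by
  rw [permKleinFour, Subgroup.card_map_of_injective (Subgroup.subtype_injective _),
    alternatingGroup.kleinFour_card_of_card_eq_four hV]

theorem index_permKleinFour (hV : Nat.card V = 4) : (permKleinFour V).index = 6 := by
  have hmul := (permKleinFour V).card_mul_index
  rw [card_permKleinFour hV, Nat.card_perm, hV, show Nat.factorial 4 = 4 * 6 from rfl] at hmul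
  exact Nat.eq_of_mul_eq_mul_left four_pos hmul

end FreeInvolutions

theorem stmt7_general {V ι : Type*} [Nonempty ι] [Finite ι] (hV : Nat.card V = 4) :
    Nat.card {σ : ι → Perm V // Pairwise fun I J ↦ IsFreeInvolution (σ J * (σ I)⁻¹)} =
      6 * Nat.descFactorial 4 (Nat.card ι) := by
  classical
  have := Nat.finite_of_card_ne_zero (hV.trans_ne four_ne_zero)
  have := Fintype.ofFinite V
  simp only [isFreeInvolution_iff_mem_permKleinFour hV]
  rw [← index_permKleinFour hV, ← card_permKleinFour hV]
  exact card_isCosetArrangement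

theorem stmt7 : Nat.card {σ : Fin 4 → Equiv.Perm (Fin 4) // IsChromo σ} = 144 :=
  (stmt7_general (ι := Fin 4) (Nat.card_fin 4)).trans (by simp [Nat.descFactorial])
end

section
/- The number of odd dashings of the standard (4,1) chromotopology is exactly 256; that is, the number of functions d : V × V → ZMod 2 (with V = ZMod 2 × ZMod 2) such that for every b ∈ V and all distinct s, u ∈ V one has d(b, b+s) + d(b+s+u, b+s) + d(b+s+u, b+u) + d(b, b+u) = 1 in ZMod 2, equals 256. -/
/-- An odd dashing of the standard (4,1) chromotopology: a function
`d : V × V → ZMod 2` (with `V = ZMod 2 × ZMod 2`, `d (b, f)` recording whether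
the edge joining boson `b` to fermion `f` is dashed) such that every 2-colored
4-cycle carries an odd number of dashes. -/
def IsOddDashing (d : (ZMod 2 × ZMod 2) × (ZMod 2 × ZMod 2) → ZMod 2) : Prop :=
  ∀ b s u : ZMod 2 × ZMod 2, s ≠ u →
    d (b, b + s) + d (b + s + u, b + s) + d (b + s + u, b + u) + d (b, b + u) = 1

/-
Switching a vertex changes two edges of each 4-cycle through it, so switching preserves odd
dashings, and every dashing can be switched to one vanishing on the edges at boson `0` and at
fermion `0`. In a plane over `ZMod 2` such an odd dashing is additive in each argument: it is a
bilinear form `B`. The sum of `B` around a 4-cycle is `B w w`, where `w ≠ 0` is the sum of the two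
colors, so the odd dashings among bilinear forms are the anisotropic ones. There are two of these,
both inducing `x² + xy + y²`, and the switches contribute the factors `2 ^ 4` (bosons) and `2 ^ 3`
(fermions other than `0`).
-/

theorem card_fun_apply_eq {ι A : Type*} [Finite ι] (i : ι) (a : A) :
    Nat.card {β : ι → A // β i = a} = Nat.card A ^ (Nat.card ι - 1) := by
  classical
  have := Fintype.ofFinite ι
  have e : {β : ι → A // β i = a} ≃ ({j // j ≠ i} → A) :=
    (Equiv.subtypeEquivRight fun β ↦ by simp [funext_iff]).trans
      (Equiv.subtypePreimage (· = i) fun _ ↦ a)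
  rw [Nat.card_congr e, Nat.card_fun, Nat.card_eq_fintype_card (α := {j // j ≠ i}),
    Fintype.card_subtype_compl, Fintype.card_subtype_eq, Nat.card_eq_fintype_card (α := ι)]

section Switching

variable {B F A : Type*}

/-- The vertex switch of a dashing: `α` and `β` select the bosons and the fermions all of whose
edges are toggled. -/
def switch [Add A] (α : B → A) (β : F → A) (d : B × F → A) : B × F → A :=
  fun p ↦ d p + α p.1 + β p.2

variable [Zero B] [Zero F]

/-- A dashing in normal form for vertex switches: no edge at boson `0` or at fermion `0` is
dashed. These edges form a spanning tree. -/
structure VanishesOnAxes [Zero A] (d : B × F → A) : Prop where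
  apply_zero_right : ∀ b, d (b, 0) = 0
  apply_zero_left : ∀ f, d (0, f) = 0

theorem VanishesOnAxes.comp_swap [Zero A] {d : B × F → A} (hd : VanishesOnAxes d) :
    VanishesOnAxes (d ∘ Prod.swap) :=
  ⟨hd.apply_zero_left, hd.apply_zero_right⟩

theorem vanishesOnAxes_bilinForm {R M : Type*} [CommSemiring R] [AddCommMonoid M] [Module R M]
    (B : LinearMap.BilinForm R M) : VanishesOnAxes fun p : M × M ↦ B p.1 p.2 :=
  ⟨by simp, by simp⟩

variable [AddCommGroup A]

theorem exists_switch_eq (d : B × F → A) :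
    ∃ (α : B → A) (β : F → A) (g : B × F → A),
      β 0 = 0 ∧ VanishesOnAxes g ∧ switch α β g = d := by
  refine ⟨fun b ↦ d (b, 0), fun f ↦ d (0, f) - d (0, 0),
    fun p ↦ d p - d (p.1, 0) - (d (0, p.2) - d (0, 0)), sub_self _, ⟨?_, ?_⟩, ?_⟩
  · simp
  · simp
  · funext p
    simp only [switch]
    abel

theorem switch_inj {α α' : B → A} {β β' : F → A} {d d' : B × F → A}
    (hβ : β 0 = 0) (hβ' : β' 0 = 0) (hd : VanishesOnAxes d) (hd' : VanishesOnAxes d') :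
    switch α β d = switch α' β' d' ↔ α = α' ∧ β = β' ∧ d = d' := by
  refine ⟨fun h ↦ ?_, by rintro ⟨rfl, rfl, rfl⟩; rfl⟩
  have hα : α = α' := funext fun b ↦ by
    simpa [switch, hβ, hβ', hd.apply_zero_right, hd'.apply_zero_right] using congrFun h (b, 0)
  have hββ' : β = β' := funext fun f ↦ by
    simpa [switch, hα, hd.apply_zero_left, hd'.apply_zero_left] using congrFun h (0, f)
  subst hα hββ'
  exact ⟨rfl, rfl, funext fun p ↦ by simpa [switch] using congrFun h p⟩

end Switching

section CycleSum

/-- The sum of `d` around the 2-colored 4-cycle with bosons `b, b + w` and fermions `f, f + w`. -/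
def cycleSum {V A : Type*} [Add V] [Add A] (d : V × V → A) (b f w : V) : A :=
  d (b, f) + d (b + w, f) + d (b + w, f + w) + d (b, f + w)

theorem cycleSum_comp_swap {V A : Type*} [Add V] [AddCommMonoid A] (d : V × V → A) (b f w : V) :
    cycleSum (d ∘ Prod.swap) b f w = cycleSum d f b w := by
  simp only [cycleSum, Function.comp_apply, Prod.swap_prod_mk]
  abel

variable {R : Type*} [CommRing R] [CharP R 2]

theorem cycleSum_switch {V : Type*} [Add V] (α β : V → R) (d : V × V → R) (b f w : V) :
    cycleSum (switch α β d) b f w = cycleSum d b f w := by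
  simp only [cycleSum, switch]
  linear_combination (α b + α (b + w) + β f + β (f + w)) * CharTwo.two_eq_zero (R := R)

theorem cycleSum_bilinForm {M : Type*} [AddCommGroup M] [Module R M]
    (B : LinearMap.BilinForm R M) (b f w : M) :
    cycleSum (fun p ↦ B p.1 p.2) b f w = B w w := by
  simp only [cycleSum, map_add, LinearMap.add_apply]
  linear_combination (2 * B b f + B b w + B w f) * CharTwo.two_eq_zero (R := R)

end CycleSum

section AnisotropicForms

theorem zmod_two_eq_one_iff_ne_zero {a : ZMod 2} : a = 1 ↔ a ≠ 0 := by
  revert a; decide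

theorem anisotropic_iff_apply_self_eq_one {M : Type*} [AddCommGroup M] [Module (ZMod 2) M]
    {B : LinearMap.BilinForm (ZMod 2) M} :
    B.toQuadraticMap.Anisotropic ↔ ∀ w ≠ 0, B w w = 1 := by
  simp only [QuadraticMap.Anisotropic, LinearMap.BilinMap.toQuadraticMap_apply, ne_eq,
    zmod_two_eq_one_iff_ne_zero, not_imp_not]

open LinearMap in
/-- The two bilinear forms on `ZMod 2 × ZMod 2` inducing the quadratic form `x² + xy + y²`, indexed
by their value at `(0, 1)` and `(1, 0)`. -/
def anisotropicForm (e : ZMod 2) : LinearMap.BilinForm (ZMod 2) (ZMod 2 × ZMod 2) :=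
  BilinForm.linMulLin (fst _ _ _) (fst _ _ _) + BilinForm.linMulLin (snd _ _ _) (snd _ _ _) +
    (e + 1) • BilinForm.linMulLin (fst _ _ _) (snd _ _ _) +
    e • BilinForm.linMulLin (snd _ _ _) (fst _ _ _)

theorem anisotropicForm_apply (e : ZMod 2) (v w : ZMod 2 × ZMod 2) :
    anisotropicForm e v w =
      v.1 * w.1 + v.2 * w.2 + (e + 1) * (v.1 * w.2) + e * (v.2 * w.1) := by
  simp [anisotropicForm]

theorem anisotropic_anisotropicForm (e : ZMod 2) :
    (anisotropicForm e).toQuadraticMap.Anisotropic := by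
  simp only [anisotropic_iff_apply_self_eq_one, anisotropicForm_apply]
  revert e
  decide

theorem eq_anisotropicForm {B : LinearMap.BilinForm (ZMod 2) (ZMod 2 × ZMod 2)}
    (hB : B.toQuadraticMap.Anisotropic) : B = anisotropicForm (B (0, 1) (1, 0)) := by
  rw [anisotropic_iff_apply_self_eq_one] at hB
  have h₁₁ : B (1, 0) (1, 0) = 1 := hB _ (by decide)
  have h₂₂ : B (0, 1) (0, 1) = 1 := hB _ (by decide)
  have h₁₂ : B (1, 0) (0, 1) = B (0, 1) (1, 0) + 1 := by
    have h : B ((1, 0) + (0, 1)) ((1, 0) + (0, 1)) = 1 := hB _ (by decide)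
    simp only [map_add, LinearMap.add_apply, h₁₁, h₂₂] at h
    grind
  ext <;> simp [anisotropicForm_apply, h₁₁, h₁₂, h₂₂]

theorem card_anisotropic_bilinForm :
    Nat.card {B : LinearMap.BilinForm (ZMod 2) (ZMod 2 × ZMod 2) //
      B.toQuadraticMap.Anisotropic} = 2 := by
  let e : {B : LinearMap.BilinForm (ZMod 2) (ZMod 2 × ZMod 2) //
      B.toQuadraticMap.Anisotropic} ≃ ZMod 2 :=
    { toFun B := B.1 (0, 1) (1, 0)
      invFun e := ⟨anisotropicForm e, anisotropic_anisotropicForm e⟩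
      left_inv B := Subtype.ext (eq_anisotropicForm B.2).symm
      right_inv e := by simp [anisotropicForm_apply] }
  rw [Nat.card_congr e, Nat.card_zmod]

end AnisotropicForms

section OddDashings

variable {d : (ZMod 2 × ZMod 2) × (ZMod 2 × ZMod 2) → ZMod 2}

theorem isOddDashing_iff_cycleSum : IsOddDashing d ↔ ∀ b f w, w ≠ 0 → cycleSum d b f w = 1 := by
  have sum_eq (b s u) : d (b, b + s) + d (b + s + u, b + s) + d (b + s + u, b + u) + d (b, b + u) =
      cycleSum d b (b + s) (s + u) := by
    have hu : b + s + (s + u) = b + u := by rw [add_assoc, CharTwo.add_cancel_left]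
    rw [cycleSum, hu, add_assoc b s u]
  simp only [IsOddDashing, sum_eq]
  constructor
  · intro h b f w hw
    have h := h b (b + f) (b + f + w) (by simpa using hw)
    rwa [CharTwo.add_cancel_left, CharTwo.add_cancel_left] at h
  · exact fun h b s u hsu ↦ h b _ _ (by rwa [ne_eq, CharTwo.add_eq_zero])

theorem isOddDashing_switch_iff {α β : ZMod 2 × ZMod 2 → ZMod 2} :
    IsOddDashing (switch α β d) ↔ IsOddDashing d := by
  simp only [isOddDashing_iff_cycleSum, cycleSum_switch]

theorem isOddDashing_bilinForm_iff {B : LinearMap.BilinForm (ZMod 2) (ZMod 2 × ZMod 2)} :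
    IsOddDashing (fun p ↦ B p.1 p.2) ↔ B.toQuadraticMap.Anisotropic := by
  simp only [isOddDashing_iff_cycleSum, cycleSum_bilinForm, anisotropic_iff_apply_self_eq_one,
    forall_const]

theorem IsOddDashing.comp_swap (hd : IsOddDashing d) : IsOddDashing (d ∘ Prod.swap) := by
  rw [isOddDashing_iff_cycleSum] at hd ⊢
  exact fun b f w hw ↦ (cycleSum_comp_swap d b f w).trans (hd f b w hw)

theorem IsOddDashing.apply_add_self_left (hd : IsOddDashing d) (h0 : VanishesOnAxes d)
    (b : ZMod 2 × ZMod 2) {w : ZMod 2 × ZMod 2} (hw : w ≠ 0) :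
    d (b + w, w) = d (b, w) + 1 := by
  have h := isOddDashing_iff_cycleSum.1 hd b 0 w hw
  simp only [cycleSum, h0.apply_zero_right, zero_add] at h
  rw [← h, add_comm (d (b + w, w)), CharTwo.add_cancel_left]

theorem IsOddDashing.apply_self (hd : IsOddDashing d) (h0 : VanishesOnAxes d)
    {w : ZMod 2 × ZMod 2} (hw : w ≠ 0) : d (w, w) = 1 := by
  simpa [h0.apply_zero_left] using hd.apply_add_self_left h0 0 hw

theorem IsOddDashing.apply_add_left (hd : IsOddDashing d) (h0 : VanishesOnAxes d)
    (b b' f : ZMod 2 × ZMod 2) : d (b + b', f) = d (b, f) + d (b', f) := by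
  have cases_plane : ∀ b b' f : ZMod 2 × ZMod 2, f ≠ 0 →
      b = 0 ∨ b' = 0 ∨ b = b' ∨ f = b ∨ f = b' ∨ f = b + b' := by decide
  rcases eq_or_ne f 0 with rfl | hf
  · simp [h0.apply_zero_right]
  rcases cases_plane b b' f hf with rfl | rfl | rfl | rfl | rfl | rfl
  · simp [h0.apply_zero_left]
  · simp [h0.apply_zero_left]
  · rw [CharTwo.add_self_eq_zero, CharTwo.add_self_eq_zero, h0.apply_zero_left]
  · rw [add_comm f, hd.apply_add_self_left h0 _ hf, hd.apply_self h0 hf, add_comm]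
  · rw [hd.apply_add_self_left h0 _ hf, hd.apply_self h0 hf]
  · have h := hd.apply_add_self_left h0 b hf
    rw [CharTwo.add_cancel_left] at h
    rw [hd.apply_self h0 hf, h, CharTwo.add_cancel_left]

theorem IsOddDashing.apply_add_right (hd : IsOddDashing d) (h0 : VanishesOnAxes d)
    (b f f' : ZMod 2 × ZMod 2) : d (b, f + f') = d (b, f) + d (b, f') :=
  hd.comp_swap.apply_add_left h0.comp_swap f f' b

theorem IsOddDashing.exists_bilinForm (hd : IsOddDashing d) (h0 : VanishesOnAxes d) :
    ∃ B : LinearMap.BilinForm (ZMod 2) (ZMod 2 × ZMod 2), d = fun p ↦ B p.1 p.2 := by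
  let left (f) := AddMonoidHom.mk' (fun b ↦ d (b, f)) (hd.apply_add_left h0 · · f)
  let right (b) := AddMonoidHom.mk' (fun f ↦ d (b, f)) (hd.apply_add_right h0 b)
  exact ⟨LinearMap.mk₂ (ZMod 2) (fun b f ↦ d (b, f))
    (hd.apply_add_left h0) (fun c b f ↦ ZMod.map_smul (left f) c b)
    (hd.apply_add_right h0) (fun c b f ↦ ZMod.map_smul (right b) c f), rfl⟩

/-- The odd dashing obtained by switching an anisotropic bilinear form. Switching every vertex has
no effect, so the switch at fermion `0` is fixed to be trivial. -/
def switchedForm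
    (x : (ZMod 2 × ZMod 2 → ZMod 2) × {β : ZMod 2 × ZMod 2 → ZMod 2 // β 0 = 0} ×
      {B : LinearMap.BilinForm (ZMod 2) (ZMod 2 × ZMod 2) // B.toQuadraticMap.Anisotropic}) :
    {d : (ZMod 2 × ZMod 2) × (ZMod 2 × ZMod 2) → ZMod 2 // IsOddDashing d} :=
  ⟨switch x.1 x.2.1 fun p ↦ x.2.2.1 p.1 p.2,
    isOddDashing_switch_iff.2 (isOddDashing_bilinForm_iff.2 x.2.2.2)⟩

theorem switchedForm_injective : Function.Injective switchedForm := by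
  rintro ⟨α, ⟨β, hβ⟩, ⟨B, hB⟩⟩ ⟨α', ⟨β', hβ'⟩, ⟨B', hB'⟩⟩ h
  obtain ⟨rfl, rfl, hBB'⟩ := (switch_inj hβ hβ' (vanishesOnAxes_bilinForm B)
    (vanishesOnAxes_bilinForm B')).1 (congrArg Subtype.val h)
  obtain rfl : B = B' := LinearMap.ext₂ fun v w ↦ congrFun hBB' (v, w)
  rfl

theorem switchedForm_surjective : Function.Surjective switchedForm := by
  rintro ⟨d, hd⟩
  obtain ⟨α, β, g, hβ, hg, rfl⟩ := exists_switch_eq d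
  have hg_odd : IsOddDashing g := isOddDashing_switch_iff.1 hd
  obtain ⟨B, rfl⟩ := hg_odd.exists_bilinForm hg
  exact ⟨(α, ⟨β, hβ⟩, ⟨B, isOddDashing_bilinForm_iff.1 hg_odd⟩), rfl⟩

end OddDashings

theorem stmt8 :
    Nat.card {d : (ZMod 2 × ZMod 2) × (ZMod 2 × ZMod 2) → ZMod 2 // IsOddDashing d}
      = 256 := by
  rw [← Nat.card_congr (Equiv.ofBijective switchedForm
    ⟨switchedForm_injective, switchedForm_surjective⟩), Nat.card_prod, Nat.card_prod,
    card_fun_apply_eq, card_anisotropic_bilinForm]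
  simp
end

section
/- For each χ ∈ ZMod 2, the map sending a dashing d to the 7-tuple (d((0,0),(0,0)), d((0,1),(0,1)), d((1,0),(1,0)), d((1,1),(1,1)), d((0,0),(0,1)), d((0,0),(1,0)), d((0,0),(1,1))) restricts to a bijection from the set of odd dashings d of the standard (4,1) chromotopology satisfying S(d) = χ onto (ZMod 2)⁷. In other words, the dashings of the four color-0 edges and of the three remaining edges incident to the boson (0,0) may be chosen freely, and each such choice, together with a prescribed chirality value, extends in a unique way to an odd dashing. -/
/-- The chirality sum of a dashing: the total dash parity of the closed path
starting at the boson `(0,0)` and following colors `0, 1, 2, 3` in order. -/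
def chiralitySum (d : (ZMod 2 × ZMod 2) × (ZMod 2 × ZMod 2) → ZMod 2) : ZMod 2 :=
  d ((0, 0), (0, 0)) + d ((0, 1), (0, 0)) + d ((0, 1), (1, 1)) + d ((0, 0), (1, 1))

/-- The seven free edge dashings: the four color-0 edges and the three remaining
edges incident to the boson `(0,0)`. -/
def freeEdges (d : (ZMod 2 × ZMod 2) × (ZMod 2 × ZMod 2) → ZMod 2) :
    Fin 7 → ZMod 2 :=
  ![d ((0, 0), (0, 0)), d ((0, 1), (0, 1)), d ((1, 0), (1, 0)), d ((1, 1), (1, 1)),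
    d ((0, 0), (0, 1)), d ((0, 0), (1, 0)), d ((0, 0), (1, 1))]


/-!
Odd dashings differ by even ones, those with every face sum zero. An even dashing that vanishes on
the spanning tree of free edges satisfies `d (f, b) = d (b, f) = d (b, b - f)`, so it is constant on
the six edges joining distinct nonzero labels, and this constant is its chirality sum. Hence an odd
dashing is determined by its chirality and its free edges.

Conversely, the face sum of a bilinear form `B` is `B (s + u) (s + u)`, so the bilinear forms on
`𝔽₂²` with diagonal `x² + xy + y²`, the anisotropic quadratic form, are odd dashings. There are two
bilinear splittings of the cross term, one of each chirality, and switching signs at vertices keeps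
the face and chirality sums while making the dashing arbitrary on a spanning tree.
-/

section Face

variable {V : Type*}

/-- The total dash parity of the face with corner the boson `b` and colors `s`, `u`. -/
def faceSum [Add V] (d : V × V → ZMod 2) (b s u : V) : ZMod 2 :=
  d (b, b + s) + d (b + s + u, b + s) + d (b + s + u, b + u) + d (b, b + u)

/-- Dashings with all face sums zero: the differences of odd dashings. The case `s = u` of a
degenerate face, excluded for odd dashings, is automatic here. -/
def IsEvenDashing [Add V] (d : V × V → ZMod 2) : Prop :=
  ∀ b s u, faceSum d b s u = 0

/-- The change of a dashing under switching the edges at the bosons in the support of `p` and at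
the fermions in the support of `q`. -/
def vertexSwitch (p q : V → ZMod 2) (e : V × V) : ZMod 2 :=
  p e.1 + q e.2

/-- The edges of color `0` together with the edges at the boson `0`, as a set of pairs
(boson, fermion); they form a spanning tree of the complete bipartite graph on `V` and `V`. -/
def spanningTree (V : Type*) [Zero V] : Set (V × V) :=
  {e | e.1 = e.2 ∨ e.1 = 0}

theorem faceSum_add [Add V] (d d' : V × V → ZMod 2) (b s u : V) :
    faceSum (d + d') b s u = faceSum d b s u + faceSum d' b s u := by
  simp only [faceSum, Pi.add_apply]
  ring

theorem faceSum_self [Add V] (d : V × V → ZMod 2) (b s : V) : faceSum d b s s = 0 := by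
  simp only [faceSum]
  grind

theorem isEvenDashing_vertexSwitch [Add V] (p q : V → ZMod 2) :
    IsEvenDashing (vertexSwitch p q) := by
  intro b s u
  simp only [faceSum, vertexSwitch]
  grind

theorem exists_vertexSwitch_eqOn_spanningTree [Zero V] (d t : V × V → ZMod 2) :
    ∃ p q, Set.EqOn (d + vertexSwitch p q) t (spanningTree V) := by
  refine ⟨fun b ↦ t (b, b) + t (0, b) + d (b, b) + d (0, b), fun f ↦ t (0, f) + d (0, f), ?_⟩
  rintro ⟨b, f⟩ (rfl | rfl : b = f ∨ b = 0) <;> simp only [Pi.add_apply, vertexSwitch] <;> grind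

theorem faceSum_bilinForm [AddCommMonoid V] [Module (ZMod 2) V]
    (B : LinearMap.BilinForm (ZMod 2) V) (b s u : V) :
    faceSum (fun e ↦ B e.1 e.2) b s u = B (s + u) (s + u) := by
  simp only [faceSum, map_add, LinearMap.add_apply]
  grind

namespace IsEvenDashing

variable [AddCommGroup V] {d : V × V → ZMod 2}

theorem apply_swap (hd : IsEvenDashing d) (diag : ∀ v, d (v, v) = 0) (b f : V) :
    d (f, b) = d (b, f) := by
  have face := hd b 0 (f - b)
  simp only [faceSum, add_zero, add_sub_cancel, diag, zero_add] at face
  exact CharTwo.add_eq_zero.mp face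

theorem apply_sub (hd : IsEvenDashing d) (row : ∀ v, d (0, v) = 0) (b f : V) :
    d (b, b - f) = d (b, f) := by
  have face := hd 0 f (b - f)
  simp only [faceSum, zero_add, add_zero, add_sub_cancel, row] at face
  exact (CharTwo.add_eq_zero.mp face).symm

end IsEvenDashing

end Face

section Chromotopology

variable {d d' e : (ZMod 2 × ZMod 2) × (ZMod 2 × ZMod 2) → ZMod 2}

theorem isOddDashing_iff_faceSum : IsOddDashing d ↔ ∀ b s u, s ≠ u → faceSum d b s u = 1 :=
  Iff.rfl

theorem chiralitySum_add (d d' : (ZMod 2 × ZMod 2) × (ZMod 2 × ZMod 2) → ZMod 2) :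
    chiralitySum (d + d') = chiralitySum d + chiralitySum d' := by
  simp only [chiralitySum, Pi.add_apply]
  ring

theorem chiralitySum_vertexSwitch (p q : ZMod 2 × ZMod 2 → ZMod 2) :
    chiralitySum (vertexSwitch p q) = 0 := by
  simp only [chiralitySum, vertexSwitch]
  grind

theorem IsOddDashing.add_isEvenDashing (hd : IsOddDashing d) (he : IsEvenDashing e) :
    IsOddDashing (d + e) := by
  refine isOddDashing_iff_faceSum.mpr fun b s u hsu ↦ ?_
  rw [faceSum_add, isOddDashing_iff_faceSum.mp hd b s u hsu, he, add_zero]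

theorem IsOddDashing.isEvenDashing_add (hd : IsOddDashing d) (hd' : IsOddDashing d') :
    IsEvenDashing (d + d') := by
  intro b s u
  obtain rfl | hsu := eq_or_ne s u
  · exact faceSum_self _ _ _
  · rw [faceSum_add, isOddDashing_iff_faceSum.mp hd b s u hsu,
      isOddDashing_iff_faceSum.mp hd' b s u hsu, CharTwo.add_self_eq_zero]

theorem IsEvenDashing.eq_zero (hd : IsEvenDashing d)
    (h0 : Set.EqOn d 0 (spanningTree (ZMod 2 × ZMod 2))) (hχ : chiralitySum d = 0) : d = 0 := by
  have diag (v : ZMod 2 × ZMod 2) : d (v, v) = 0 := h0 (Or.inl rfl)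
  have row (v : ZMod 2 × ZMod 2) : d ((0, 0), v) = 0 := h0 (Or.inr rfl)
  have column (v : ZMod 2 × ZMod 2) : d (v, (0, 0)) = 0 := (hd.apply_swap diag _ v).trans (row v)
  have d_01_11 : d ((0, 1), (1, 1)) = 0 := by
    simpa only [chiralitySum, row, column, zero_add, add_zero] using hχ
  have d_01_10 : d ((0, 1), (1, 0)) = 0 := (hd.apply_sub row (0, 1) (1, 1)).trans d_01_11
  have d_11_01 : d ((1, 1), (0, 1)) = 0 := (hd.apply_swap diag _ _).trans d_01_11
  have d_11_10 : d ((1, 1), (1, 0)) = 0 := (hd.apply_sub row (1, 1) (0, 1)).trans d_11_01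
  have d_10_01 : d ((1, 0), (0, 1)) = 0 := (hd.apply_swap diag _ _).trans d_01_10
  have d_10_11 : d ((1, 0), (1, 1)) = 0 := (hd.apply_swap diag _ _).trans d_11_10
  ext ⟨⟨b₁, b₂⟩, f₁, f₂⟩
  fin_cases b₁ <;> fin_cases b₂ <;> fin_cases f₁ <;> fin_cases f₂ <;>
    first | exact diag _ | exact row _ | exact column _ | assumption

theorem IsOddDashing.eq_of_eqOn_spanningTree (hd : IsOddDashing d)
    (hd' : IsOddDashing d') (hχ : chiralitySum d = chiralitySum d')
    (h : Set.EqOn d d' (spanningTree (ZMod 2 × ZMod 2))) : d = d' := by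
  have sum_eq_zero : d + d' = 0 := by
    refine (hd.isEvenDashing_add hd').eq_zero (fun e he ↦ ?_) ?_
    · rw [Pi.add_apply, h he, CharTwo.add_self_eq_zero, Pi.zero_apply]
    · rw [chiralitySum_add, hχ, CharTwo.add_self_eq_zero]
  ext e
  exact CharTwo.add_eq_zero.mp (congrFun sum_eq_zero e)

/-- The bilinear form on `𝔽₂²` with diagonal `x² + xy + y²` whose cross term at `(x, y)`,
`(x', y')` is `x y'` if `χ = 1` and `y x'` if `χ = 0`; read as a dashing, it is odd of
chirality `χ`. -/
def chiralForm (χ : ZMod 2) : LinearMap.BilinForm (ZMod 2) (ZMod 2 × ZMod 2) :=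
  LinearMap.mk₂ (ZMod 2)
    (fun b f ↦ b.1 * f.1 + b.2 * f.2 + χ * (b.1 * f.2) + (χ + 1) * (b.2 * f.1))
    (fun _ _ _ ↦ by simp only [Prod.fst_add, Prod.snd_add]; ring)
    (fun _ _ _ ↦ by simp only [Prod.smul_fst, Prod.smul_snd, smul_eq_mul]; ring)
    (fun _ _ _ ↦ by simp only [Prod.fst_add, Prod.snd_add]; ring)
    (fun _ _ _ ↦ by simp only [Prod.smul_fst, Prod.smul_snd, smul_eq_mul]; ring)

theorem chiralForm_self (χ : ZMod 2) {x : ZMod 2 × ZMod 2} (hx : x ≠ 0) :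
    chiralForm χ x x = 1 := by
  revert χ x
  decide

theorem isOddDashing_of_bilinForm {B : LinearMap.BilinForm (ZMod 2) (ZMod 2 × ZMod 2)}
    (hB : ∀ x ≠ 0, B x x = 1) : IsOddDashing fun e ↦ B e.1 e.2 := by
  refine isOddDashing_iff_faceSum.mpr fun b s u hsu ↦ ?_
  rw [faceSum_bilinForm]
  exact hB _ fun h ↦ hsu (CharTwo.add_eq_zero.mp h)

theorem chiralitySum_chiralForm (χ : ZMod 2) :
    chiralitySum (fun e ↦ chiralForm χ e.1 e.2) = χ := by
  revert χ
  decide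

theorem exists_isOddDashing_eqOn_spanningTree (χ : ZMod 2)
    (t : (ZMod 2 × ZMod 2) × (ZMod 2 × ZMod 2) → ZMod 2) :
    ∃ d, IsOddDashing d ∧ chiralitySum d = χ ∧ Set.EqOn d t (spanningTree (ZMod 2 × ZMod 2)) := by
  obtain ⟨p, q, hpq⟩ :=
    exists_vertexSwitch_eqOn_spanningTree (fun e ↦ chiralForm χ e.1 e.2) t
  refine ⟨_, ?_, ?_, hpq⟩
  · exact (isOddDashing_of_bilinForm fun _ ↦ chiralForm_self χ).add_isEvenDashing
      (isEvenDashing_vertexSwitch p q)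
  · rw [chiralitySum_add, chiralitySum_chiralForm, chiralitySum_vertexSwitch, add_zero]

/-- The seven edges, as pairs (boson, fermion), whose dashings `freeEdges` lists. -/
def freeEdge : Fin 7 → (ZMod 2 × ZMod 2) × (ZMod 2 × ZMod 2) :=
  ![((0, 0), (0, 0)), ((0, 1), (0, 1)), ((1, 0), (1, 0)), ((1, 1), (1, 1)),
    ((0, 0), (0, 1)), ((0, 0), (1, 0)), ((0, 0), (1, 1))]

theorem freeEdge_injective : Function.Injective freeEdge := by
  decide

theorem range_freeEdge : Set.range freeEdge = spanningTree (ZMod 2 × ZMod 2) := by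
  have mem_iff : ∀ e, (∃ i, freeEdge i = e) ↔ e.1 = e.2 ∨ e.1 = 0 := by decide
  exact Set.ext mem_iff

theorem freeEdges_eq_comp (d : (ZMod 2 × ZMod 2) × (ZMod 2 × ZMod 2) → ZMod 2) :
    freeEdges d = d ∘ freeEdge := by
  ext i
  fin_cases i <;> rfl

theorem freeEdges_surjective : Function.Surjective freeEdges := by
  rw [funext freeEdges_eq_comp]
  exact freeEdge_injective.surjective_comp_right

theorem freeEdges_eq_iff :
    freeEdges d = freeEdges d' ↔ Set.EqOn d d' (spanningTree (ZMod 2 × ZMod 2)) := by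
  rw [freeEdges_eq_comp, freeEdges_eq_comp, ← range_freeEdge, Set.eqOn_range]

end Chromotopology

theorem stmt9 (χ : ZMod 2) :
    Set.BijOn freeEdges {d | IsOddDashing d ∧ chiralitySum d = χ} Set.univ := by
  refine ⟨Set.mapsTo_univ _ _, ?_, ?_⟩
  · rintro d ⟨hd, hdχ⟩ d' ⟨hd', hdχ'⟩ h
    exact hd.eq_of_eqOn_spanningTree hd' (hdχ.trans hdχ'.symm) (freeEdges_eq_iff.mp h)
  · intro a _
    obtain ⟨t, rfl⟩ := freeEdges_surjective a
    obtain ⟨d, hd, hdχ, hdt⟩ := exists_isOddDashing_eqOn_spanningTree χ t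
    exact ⟨d, ⟨hd, hdχ⟩, freeEdges_eq_iff.mpr hdt⟩
end

section
/- The number of quadruples (L_1,L_2,L_3,L_4) of 4×4 signed permutation matrices with integer entries satisfying the garden algebra relations is exactly 36864. (Equivalently, there are exactly 36864 (4,1) valise adinkras.) -/
open Matrix

/-!
The integer orthogonal matrices are exactly the signed permutation matrices, and the garden
relations with `I = J` say that each `L I` is orthogonal. The remaining relations say that
`(L I)⁻¹ * L J = -((L J)⁻¹ * L I)` in the orthogonal group, a condition invariant under left
translation. Dividing by `L 0` therefore leaves a free choice of `L 0` together with pairwise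
anticommuting matrices of square `-1`. In dimension four, an orthogonal integer matrix of square
`-1` is multiplication by one of the quaternions `±i`, `±j`, `±k`, on the left or on the right. Left
and right multiplications commute, so an anticommuting family lives on one side and uses distinct
imaginary units, each with an arbitrary sign.
-/

section GardenFamily

variable {G ι : Type*} [Group G] [HasDistribNeg G] {N : ℕ}

/-- The group-theoretic form of the off-diagonal garden relations: the quotients `(g I)⁻¹ * g J`
and `(g J)⁻¹ * g I` are opposite for `I ≠ J`. -/
def IsGardenFamily (g : ι → G) : Prop :=
  Pairwise fun I J => (g I)⁻¹ * g J = -((g J)⁻¹ * g I)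

/-- A family of pairwise anticommuting square roots of `-1`, as the generators of a negative
definite Clifford algebra. -/
def IsCliffordFamily (a : ι → G) : Prop :=
  (∀ I, a I * a I = -1) ∧ Pairwise fun I J => a I * a J = -(a J * a I)

lemma inv_eq_neg_iff_mul_self_eq_neg_one {a : G} : a⁻¹ = -a ↔ a * a = -1 := by
  rw [inv_eq_iff_mul_eq_one, mul_neg, neg_eq_iff_eq_neg]

lemma isGardenFamily_mul_left_iff {g : ι → G} (p : G) :
    IsGardenFamily (fun I => p * g I) ↔ IsGardenFamily g := by
  simp only [IsGardenFamily, _root_.mul_inv_rev, mul_assoc, inv_mul_cancel_left]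

lemma IsGardenFamily.mul_inv_eq_neg {g : ι → G} (hg : IsGardenFamily g) {I J : ι} (hIJ : I ≠ J) :
    g I * (g J)⁻¹ = -(g J * (g I)⁻¹) := by
  simpa [mul_assoc] using congrArg (fun x => g J * x * (g J)⁻¹) (hg hIJ.symm)

lemma isGardenFamily_cons_one_iff {a : Fin N → G} :
    IsGardenFamily (Fin.cons 1 a : Fin (N + 1) → G) ↔ IsCliffordFamily a := by
  have hsq (I : Fin N) : a I = -(a I)⁻¹ ↔ a I * a I = -1 := by
    rw [eq_comm, neg_eq_iff_eq_neg, inv_eq_neg_iff_mul_self_eq_neg_one]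
  unfold IsGardenFamily IsCliffordFamily
  rw [pairwise_fin_succ_iff]
  simp only [Fin.cons_zero, Fin.cons_succ, inv_one, one_mul, mul_one, hsq,
    inv_eq_neg_iff_mul_self_eq_neg_one, ← and_assoc, and_self]
  refine and_congr_right fun h => ?_
  simp only [inv_eq_neg_iff_mul_self_eq_neg_one.2 (h _), neg_mul, neg_inj]

lemma isGardenFamily_cons_iff {p : G} {a : Fin N → G} :
    IsGardenFamily (Fin.cons p fun I => p * a I : Fin (N + 1) → G) ↔ IsCliffordFamily a := by
  rw [← isGardenFamily_cons_one_iff, ← isGardenFamily_mul_left_iff (g := Fin.cons 1 a) p]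
  congr! 2 with I
  cases I using Fin.cases <;> simp

/-- Dividing a garden family by its first member leaves a Clifford family. -/
def gardenFamilyEquiv :
    {g : Fin (N + 1) → G // IsGardenFamily g} ≃ G × {a : Fin N → G // IsCliffordFamily a} where
  toFun g := (g.1 0, ⟨fun I => (g.1 0)⁻¹ * g.1 I.succ, by
    rw [← isGardenFamily_cons_iff (p := g.1 0)]
    simpa only [mul_inv_cancel_left] using! (Fin.cons_self_tail g.1).symm ▸ g.2⟩)
  invFun x := ⟨Fin.cons x.1 fun I => x.1 * x.2.1 I, isGardenFamily_cons_iff.2 x.2.2⟩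
  left_inv g := by simpa using Subtype.ext (Fin.cons_self_tail g.1)
  right_inv x := by simp

end GardenFamily

section Unitary

variable {A : Type*} [Ring A] [StarRing A]

lemma unitary_eq_neg_iff {x y : unitary A} : x = -y ↔ (x : A) + y = 0 := by
  rw [← Subtype.val_inj, Unitary.coe_neg, eq_neg_iff_add_eq_zero]

lemma unitary_ne_neg_self (h2 : (2 : A) ≠ 0) (x : unitary A) : x ≠ -x := by
  intro h
  have htwo : (2 : A) * x = 0 := by rw [two_mul, unitary_eq_neg_iff.1 h]
  refine h2 ?_
  rw [← mul_one 2, ← Unitary.coe_mul_star_self x, ← mul_assoc, htwo, zero_mul]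

end Unitary

lemma pi_single_units_inj {ι R : Type*} [DecidableEq ι] [MonoidWithZero R] [Nontrivial R]
    {i j : ι} {ε δ : Rˣ} :
    (Pi.single i (ε : R) : ι → R) = Pi.single j (δ : R) ↔ i = j ∧ ε = δ := by
  refine ⟨fun h => ?_, by rintro ⟨rfl, rfl⟩; rfl⟩
  have hi := congrFun h i
  rcases eq_or_ne i j with rfl | hij
  · exact ⟨rfl, by simpa [Units.val_inj] using hi⟩
  · simp [hij] at hi

section IntegerOrthogonal

open scoped Nat

variable {n : Type*} [DecidableEq n]

/-- The signed permutation matrix with entry `ε i` at position `(i, σ i)`. -/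
def signedPerm (σ : Equiv.Perm n) (ε : n → ℤˣ) : Matrix n n ℤ :=
  Matrix.of fun i => Pi.single (σ i) (ε i : ℤ)

lemma signedPerm_injective :
    Function.Injective fun p : Equiv.Perm n × (n → ℤˣ) => signedPerm p.1 p.2 := by
  rintro ⟨σ, ε⟩ ⟨τ, δ⟩ h
  have hrow (i : n) : σ i = τ i ∧ ε i = δ i := pi_single_units_inj.1 (congrFun h i)
  exact Prod.ext (Equiv.ext fun i => (hrow i).1) (funext fun i => (hrow i).2)

variable [Fintype n]

lemma exists_eq_single_of_dotProduct_self_eq_one {v : n → ℤ} (hv : v ⬝ᵥ v = 1) :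
    ∃ (i : n) (ε : ℤˣ), v = Pi.single i (ε : ℤ) := by
  obtain ⟨i, hi⟩ : ∃ i, v i ≠ 0 := by
    by_contra! h
    simp [dotProduct, h] at hv
  have hsum : v i * v i + ∑ j ∈ Finset.univ.erase i, v j * v j = 1 := by
    rwa [Finset.add_sum_erase _ (fun j => v j * v j) (Finset.mem_univ i)]
  have hnonneg : ∀ j ∈ Finset.univ.erase i, 0 ≤ v j * v j := fun j _ => mul_self_nonneg _
  have hpos : 0 < v i * v i := mul_self_pos.2 hi
  have hrest : ∑ j ∈ Finset.univ.erase i, v j * v j = 0 :=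
    le_antisymm (by lia) (Finset.sum_nonneg hnonneg)
  have hone : v i * v i = 1 := by rwa [hrest, add_zero] at hsum
  refine ⟨i, ⟨v i, v i, hone, hone⟩, funext fun j => ?_⟩
  rcases eq_or_ne j i with rfl | hj
  · simp
  · simpa [hj] using (Finset.sum_eq_zero_iff_of_nonneg hnonneg).1 hrest j (by simp [hj])

lemma mem_orthogonalGroup_iff_dotProduct {R : Type*} [CommRing R] {M : Matrix n n R} :
    M ∈ orthogonalGroup n R ↔ ∀ i j, M i ⬝ᵥ M j = if i = j then 1 else 0 := by
  rw [mem_orthogonalGroup_iff, ← Matrix.ext_iff]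
  rfl

lemma signedPerm_mem_orthogonalGroup (σ : Equiv.Perm n) (ε : n → ℤˣ) :
    signedPerm σ ε ∈ orthogonalGroup n ℤ := by
  refine mem_orthogonalGroup_iff_dotProduct.2 fun i j => ?_
  change Pi.single (σ i) (ε i : ℤ) ⬝ᵥ Pi.single (σ j) (ε j : ℤ) = _
  rcases eq_or_ne i j with rfl | hij
  · simp
  · simp [hij]

lemma exists_signedPerm_eq_of_mem_orthogonalGroup {M : Matrix n n ℤ}
    (hM : M ∈ orthogonalGroup n ℤ) : ∃ σ ε, signedPerm σ ε = M := by
  rw [mem_orthogonalGroup_iff_dotProduct] at hM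
  choose f ε hf using fun i =>
    exists_eq_single_of_dotProduct_self_eq_one ((hM i i).trans (if_pos rfl))
  have hinj : Function.Injective f := fun i j hij => by
    by_contra hne
    simpa [hf, hij, hne] using hM i j
  exact ⟨Equiv.ofBijective f (Finite.injective_iff_bijective.1 hinj), ε,
    funext fun i => (hf i).symm⟩

lemma card_orthogonalGroup_int :
    Nat.card (orthogonalGroup n ℤ) = (Fintype.card n)! * 2 ^ Fintype.card n := by
  let f : Equiv.Perm n × (n → ℤˣ) → orthogonalGroup n ℤ := fun p =>
    ⟨signedPerm p.1 p.2, signedPerm_mem_orthogonalGroup p.1 p.2⟩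
  have hf : Function.Bijective f :=
    ⟨fun p q h => signedPerm_injective (congrArg Subtype.val h), fun M =>
      let ⟨σ, ε, h⟩ := exists_signedPerm_eq_of_mem_orthogonalGroup M.2
      ⟨(σ, ε), Subtype.ext h⟩⟩
  rw [← Nat.card_congr (Equiv.ofBijective f hf)]
  simp [Fintype.card_perm]

end IntegerOrthogonal

section GardenRel

variable {d N : ℕ}

lemma isSignedPerm_of_mem_orthogonalGroup {M : Matrix (Fin d) (Fin d) ℤ}
    (hM : M ∈ orthogonalGroup (Fin d) ℤ) : IsSignedPerm M := by
  obtain ⟨σ, ε, rfl⟩ := exists_signedPerm_eq_of_mem_orthogonalGroup hM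
  have hne {i j : Fin d} : signedPerm σ ε i j ≠ 0 ↔ j = σ i := by
    simp [signedPerm, Pi.single_apply]
  refine ⟨fun i j => ?_, fun i => ?_, fun j => ?_⟩
  · by_cases hj : j = σ i
    · rcases Int.units_eq_one_or (ε i) with h | h <;> simp [signedPerm, h, hj]
    · exact Or.inl (not_imp_comm.1 hne.1 hj)
  · simp only [hne, existsUnique_eq]
  · simpa only [hne, eq_comm] using σ.bijective.existsUnique j

lemma GardenRel.mem_orthogonalGroup {L : Fin N → Matrix (Fin d) (Fin d) ℤ} (hL : GardenRel L)
    (I : Fin N) : L I ∈ orthogonalGroup (Fin d) ℤ := by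
  have h : (2 : ℤ) • (L I * (L I)ᵀ) = (2 : ℤ) • 1 := by
    rw [two_smul, (hL I I).1, if_pos rfl]
  exact (mem_orthogonalGroup_iff _ _).2 (smul_right_injective _ two_ne_zero h)

lemma forall_isSignedPerm_and_gardenRel_iff {L : Fin N → Matrix (Fin d) (Fin d) ℤ} :
    ((∀ I, IsSignedPerm (L I)) ∧ GardenRel L) ↔ GardenRel L :=
  and_iff_right_of_imp fun hL I => isSignedPerm_of_mem_orthogonalGroup (hL.mem_orthogonalGroup I)

lemma gardenRel_coe_iff {g : Fin N → orthogonalGroup (Fin d) ℤ} :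
    GardenRel (fun I => (g I : Matrix (Fin d) (Fin d) ℤ)) ↔ IsGardenFamily g := by
  refine ⟨fun h I J hIJ => ?_, fun h I J => ?_⟩
  · exact unitary_eq_neg_iff.2 ((h I J).2.trans (if_neg hIJ))
  · rcases eq_or_ne I J with rfl | hIJ
    · simp only [if_true, two_smul, (mem_orthogonalGroup_iff _ _).1 (g I).2,
        (mem_orthogonalGroup_iff' _ _).1 (g I).2, and_self]
    · simp only [if_neg hIJ]
      exact ⟨unitary_eq_neg_iff.1 (h.mul_inv_eq_neg hIJ), unitary_eq_neg_iff.1 (h hIJ)⟩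

/-- Solutions of the garden relations are the garden families of the integer orthogonal group. -/
def gardenRelEquiv :
    {L : Fin N → Matrix (Fin d) (Fin d) ℤ // GardenRel L} ≃
      {g : Fin N → orthogonalGroup (Fin d) ℤ // IsGardenFamily g} where
  toFun L := ⟨fun I => ⟨L.1 I, L.2.mem_orthogonalGroup I⟩, gardenRel_coe_iff.1 L.2⟩
  invFun g := ⟨fun I => g.1 I, gardenRel_coe_iff.2 g.2⟩
  left_inv _ := rfl
  right_inv _ := rfl

end GardenRel

section SkewMatrix

variable {R : Type*} [CommRing R]

/-- The general skew-symmetric `4 × 4` matrix: `v` is the lower part of the first column, and the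
lower right block is the matrix of `x ↦ w × x`. -/
def skewMatrix (v w : Fin 3 → R) : Matrix (Fin 4) (Fin 4) R :=
  !![0, -v 0, -v 1, -v 2;
     v 0, 0, -w 2, w 1;
     v 1, w 2, 0, -w 0;
     v 2, -w 1, w 0, 0]

lemma skewMatrix_inj {v w v' w' : Fin 3 → R} :
    skewMatrix v w = skewMatrix v' w' ↔ v = v' ∧ w = w' := by
  refine ⟨fun h => ?_, by rintro ⟨rfl, rfl⟩; rfl⟩
  have hentry (i j : Fin 4) : skewMatrix v w i j = skewMatrix v' w' i j := by rw [h]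
  constructor <;> ext i <;> fin_cases i
  exacts [hentry 1 0, hentry 2 0, hentry 3 0, hentry 3 2, hentry 1 3, hentry 2 1]

lemma transpose_skewMatrix (v w : Fin 3 → R) : (skewMatrix v w)ᵀ = -skewMatrix v w := by
  ext i j
  fin_cases i <;> fin_cases j <;> simp [skewMatrix]

lemma skewMatrix_add (v w v' w' : Fin 3 → R) :
    skewMatrix (v + v') (w + w') = skewMatrix v w + skewMatrix v' w' := by
  ext i j
  fin_cases i <;> fin_cases j <;> simp [skewMatrix, add_comm]

lemma exists_eq_skewMatrix_of_transpose_eq_neg [IsAddTorsionFree R]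
    {M : Matrix (Fin 4) (Fin 4) R} (hM : Mᵀ = -M) : ∃ v w, M = skewMatrix v w := by
  have hskew (i j : Fin 4) : M j i = -M i j := congrFun (congrFun hM i) j
  have hdiag (i : Fin 4) : M i i = 0 := self_eq_neg.1 (hskew i i)
  refine ⟨fun i => M i.succ 0, ![M 3 2, M 1 3, M 2 1], ?_⟩
  ext i j
  fin_cases i <;> fin_cases j <;> simp [skewMatrix, hdiag, ← hskew]

lemma dotProduct_self_and_sq_eq_sq_of_skewMatrix_mem_orthogonalGroup [IsAddTorsionFree R]
    {v w : Fin 3 → R} (h : skewMatrix v w ∈ orthogonalGroup (Fin 4) R) :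
    v ⬝ᵥ v = 1 ∧ ∀ i, w i ^ 2 = v i ^ 2 := by
  have hrow (i : Fin 4) : skewMatrix v w i ⬝ᵥ skewMatrix v w i = 1 :=
    (mem_orthogonalGroup_iff_dotProduct.1 h i i).trans (if_pos rfl)
  have hrow₀ : v 0 ^ 2 + v 1 ^ 2 + v 2 ^ 2 = 1 := by
    simpa [skewMatrix, dotProduct, Fin.sum_univ_succ, ← sq, ← add_assoc] using hrow 0
  have hrow₁ : v 0 ^ 2 + w 2 ^ 2 + w 1 ^ 2 = 1 := by
    simpa [skewMatrix, dotProduct, Fin.sum_univ_succ, ← sq, ← add_assoc] using hrow 1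
  have hrow₂ : v 1 ^ 2 + w 2 ^ 2 + w 0 ^ 2 = 1 := by
    simpa [skewMatrix, dotProduct, Fin.sum_univ_succ, ← sq, ← add_assoc] using hrow 2
  have hrow₃ : v 2 ^ 2 + w 1 ^ 2 + w 0 ^ 2 = 1 := by
    simpa [skewMatrix, dotProduct, Fin.sum_univ_succ, ← sq, ← add_assoc] using hrow 3
  refine ⟨by rw [vec3_dotProduct]; linear_combination hrow₀, fun i => ?_⟩
  apply nsmul_right_injective two_ne_zero
  fin_cases i <;> simp only [Fin.zero_eta, Fin.mk_one, Fin.reduceFinMk, two_nsmul]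
  · linear_combination hrow₂ + hrow₃ - hrow₀ - hrow₁
  · linear_combination hrow₁ + hrow₃ - hrow₀ - hrow₂
  · linear_combination hrow₁ + hrow₂ - hrow₀ - hrow₃

end SkewMatrix

section QuaternionMatrix

variable {R : Type*} [CommRing R]

/-- Multiplication by the imaginary quaternion with coordinates `p` in the basis `1, i, j, k`, on
the left for `s = 1` and on the right for `s = -1`. -/
def quaternionMatrix (s : R) (p : Fin 3 → R) : Matrix (Fin 4) (Fin 4) R :=
  skewMatrix p (s • p)

lemma quaternionMatrix_add (s : R) (p q : Fin 3 → R) :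
    quaternionMatrix s (p + q) = quaternionMatrix s p + quaternionMatrix s q := by
  simp only [quaternionMatrix, smul_add, skewMatrix_add]

lemma quaternionMatrix_mul_self {s : R} (hs : s * s = 1) (p : Fin 3 → R) :
    quaternionMatrix s p * quaternionMatrix s p = -(p ⬝ᵥ p) • 1 := by
  ext i j
  fin_cases i <;> fin_cases j <;>
    simp [quaternionMatrix, skewMatrix, Matrix.mul_apply, Fin.sum_univ_succ, vec3_dotProduct] <;>
    grind

lemma quaternionMatrix_mul_add_mul {s : R} (hs : s * s = 1) (p q : Fin 3 → R) :
    quaternionMatrix s p * quaternionMatrix s q + quaternionMatrix s q * quaternionMatrix s p =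
      -(2 * p ⬝ᵥ q) • 1 := by
  have hpq := quaternionMatrix_mul_self hs (p + q)
  rw [quaternionMatrix_add, add_mul, mul_add, mul_add, quaternionMatrix_mul_self hs,
    quaternionMatrix_mul_self hs, add_dotProduct, dotProduct_add, dotProduct_add,
    dotProduct_comm q p] at hpq
  linear_combination (norm := module) hpq

lemma commute_quaternionMatrix_neg {s : R} (hs : s * s = 1) (p q : Fin 3 → R) :
    Commute (quaternionMatrix s p) (quaternionMatrix (-s) q) := by
  ext i j
  fin_cases i <;> fin_cases j <;>
    simp [quaternionMatrix, skewMatrix, Matrix.mul_apply, Fin.sum_univ_succ] <;> grind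

lemma quaternionMatrix_mem_orthogonalGroup {s : R} (hs : s * s = 1) {p : Fin 3 → R}
    (hp : p ⬝ᵥ p = 1) : quaternionMatrix s p ∈ orthogonalGroup (Fin 4) R := by
  have htranspose : (quaternionMatrix s p)ᵀ = -quaternionMatrix s p := transpose_skewMatrix _ _
  rw [mem_orthogonalGroup_iff, htranspose, mul_neg, quaternionMatrix_mul_self hs, hp, neg_smul,
    one_smul, neg_neg]

lemma exists_eq_quaternionMatrix_of_mem_orthogonalGroup {M : Matrix (Fin 4) (Fin 4) ℤ}
    (hM : M ∈ orthogonalGroup (Fin 4) ℤ) (hskew : Mᵀ = -M) :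
    ∃ (s : ℤˣ) (i : Fin 3) (ε : ℤˣ), M = quaternionMatrix (s : ℤ) (Pi.single i (ε : ℤ)) := by
  obtain ⟨v, w, rfl⟩ := exists_eq_skewMatrix_of_transpose_eq_neg hskew
  obtain ⟨hv, hw⟩ := dotProduct_self_and_sq_eq_sq_of_skewMatrix_mem_orthogonalGroup hM
  obtain ⟨i, ε, rfl⟩ := exists_eq_single_of_dotProduct_self_eq_one hv
  obtain ⟨s, hs⟩ : ∃ s : ℤˣ, w i = s * ε := by
    rcases sq_eq_sq_iff_eq_or_eq_neg.1 (hw i) with h | h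
    · exact ⟨1, by simpa using h⟩
    · exact ⟨-1, by simpa using h⟩
  have hw_eq : w = (s : ℤ) • Pi.single i (ε : ℤ) := by
    ext j
    rcases eq_or_ne j i with rfl | hj
    · simpa using hs
    · simpa [hj] using hw j
  exact ⟨s, i, ε, congrArg _ hw_eq⟩

end QuaternionMatrix

section QuaternionUnit

variable {s t : ℤˣ} {i j : Fin 3} {ε δ : ℤˣ}

/-- Multiplication by `ε` times the `i`-th imaginary unit, as an integer orthogonal matrix; as in
`quaternionMatrix`, the side is given by `s`. -/
def quaternionUnit (s : ℤˣ) (i : Fin 3) (ε : ℤˣ) : orthogonalGroup (Fin 4) ℤ :=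
  ⟨quaternionMatrix (s : ℤ) (Pi.single i (ε : ℤ)),
    quaternionMatrix_mem_orthogonalGroup (by simp) (by simp)⟩

lemma quaternionUnit_inj :
    quaternionUnit s i ε = quaternionUnit t j δ ↔ s = t ∧ i = j ∧ ε = δ := by
  refine ⟨fun h => ?_, by rintro ⟨rfl, rfl, rfl⟩; rfl⟩
  obtain ⟨hv, hw⟩ := skewMatrix_inj.1 (congrArg Subtype.val h)
  obtain ⟨rfl, rfl⟩ := pi_single_units_inj.1 hv
  exact ⟨by simpa [Units.val_inj] using congrFun hw i, rfl, rfl⟩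

lemma quaternionUnit_mul_self (s : ℤˣ) (i : Fin 3) (ε : ℤˣ) :
    quaternionUnit s i ε * quaternionUnit s i ε = -1 :=
  Subtype.ext <| (quaternionMatrix_mul_self (by simp) _).trans (by simp; rfl)

lemma mul_self_eq_neg_one_iff_exists_eq_quaternionUnit {x : orthogonalGroup (Fin 4) ℤ} :
    x * x = -1 ↔ ∃ s i ε, x = quaternionUnit s i ε := by
  refine ⟨fun h => ?_, by rintro ⟨s, i, ε, rfl⟩; exact quaternionUnit_mul_self s i ε⟩
  have hskew : (x : Matrix (Fin 4) (Fin 4) ℤ)ᵀ = -x :=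
    congrArg Subtype.val (inv_eq_neg_iff_mul_self_eq_neg_one.2 h)
  obtain ⟨s, i, ε, hx⟩ := exists_eq_quaternionMatrix_of_mem_orthogonalGroup x.2 hskew
  exact ⟨s, i, ε, Subtype.ext hx⟩

lemma commute_quaternionUnit_neg (s : ℤˣ) (i j : Fin 3) (ε δ : ℤˣ) :
    Commute (quaternionUnit s i ε) (quaternionUnit (-s) j δ) :=
  Subtype.ext (commute_quaternionMatrix_neg (by simp) _ _).eq

lemma quaternionUnit_anticomm_same_side_iff :
    quaternionUnit s i ε * quaternionUnit s j δ = -(quaternionUnit s j δ * quaternionUnit s i ε) ↔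
      i ≠ j := by
  have hsum : ((quaternionUnit s i ε * quaternionUnit s j δ : orthogonalGroup (Fin 4) ℤ) :
        Matrix (Fin 4) (Fin 4) ℤ) +
      (quaternionUnit s j δ * quaternionUnit s i ε : orthogonalGroup (Fin 4) ℤ) =
      -(2 * Pi.single i (ε : ℤ) ⬝ᵥ Pi.single j (δ : ℤ)) • 1 :=
    quaternionMatrix_mul_add_mul (by simp) _ _
  rw [unitary_eq_neg_iff, hsum, smul_eq_zero_iff_left one_ne_zero, neg_eq_zero]
  rcases eq_or_ne i j with rfl | hij
  · simp
  · simp [hij]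

lemma quaternionUnit_anticomm_iff :
    quaternionUnit s i ε * quaternionUnit t j δ = -(quaternionUnit t j δ * quaternionUnit s i ε) ↔
      s = t ∧ i ≠ j := by
  rcases eq_or_ne s t with rfl | hst
  · rw [quaternionUnit_anticomm_same_side_iff, and_iff_right rfl]
  · obtain rfl : t = -s := Int.units_ne_iff_eq_neg.1 hst.symm
    rw [(commute_quaternionUnit_neg s i j ε δ).eq]
    exact iff_of_false (unitary_ne_neg_self (by decide) _) fun h => hst h.1

lemma card_isCliffordFamily (N : ℕ) :
    Nat.card {a : Fin (N + 1) → orthogonalGroup (Fin 4) ℤ // IsCliffordFamily a} =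
      2 * Nat.descFactorial 3 (N + 1) * 2 ^ (N + 1) := by
  let f : ℤˣ × (Fin (N + 1) ↪ Fin 3) × (Fin (N + 1) → ℤˣ) →
      {a : Fin (N + 1) → orthogonalGroup (Fin 4) ℤ // IsCliffordFamily a} := fun x =>
    ⟨fun I => quaternionUnit x.1 (x.2.1 I) (x.2.2 I), fun I => quaternionUnit_mul_self _ _ _,
      fun I J hIJ => quaternionUnit_anticomm_iff.2 ⟨rfl, x.2.1.injective.ne hIJ⟩⟩
  have hinj : Function.Injective f := by
    rintro ⟨s, e, ε⟩ ⟨t, e', δ⟩ h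
    have hentry (I) : s = t ∧ e I = e' I ∧ ε I = δ I :=
      quaternionUnit_inj.1 (congrFun (congrArg Subtype.val h) I)
    exact Prod.ext (hentry 0).1 (Prod.ext (DFunLike.ext _ _ fun I => (hentry I).2.1)
      (funext fun I => (hentry I).2.2))
  have hsurj : Function.Surjective f := by
    rintro ⟨a, hsq, hanti⟩
    choose s i ε ha using fun I => mul_self_eq_neg_one_iff_exists_eq_quaternionUnit.1 (hsq I)
    obtain rfl : a = fun I => quaternionUnit (s I) (i I) (ε I) := funext ha
    have hpair (I J) (hIJ : I ≠ J) : s I = s J ∧ i I ≠ i J :=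
      quaternionUnit_anticomm_iff.1 (hanti hIJ)
    have hside (I) : s 0 = s I := by
      rcases eq_or_ne 0 I with rfl | h
      exacts [rfl, (hpair 0 I h).1]
    have hi : Function.Injective i := fun I J => not_imp_not.1 fun hIJ => (hpair I J hIJ).2
    exact ⟨(s 0, ⟨i, hi⟩, ε), Subtype.ext (funext fun I => by simp [f, hside I])⟩
  rw [← Nat.card_congr (Equiv.ofBijective f ⟨hinj, hsurj⟩)]
  simp [Fintype.card_embedding_eq, mul_assoc]

end QuaternionUnit

theorem stmt10_general (N : ℕ) :
    Nat.card {L : Fin (N + 2) → Matrix (Fin 4) (Fin 4) ℤ //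
        (∀ I, IsSignedPerm (L I)) ∧ GardenRel L} =
      768 * Nat.descFactorial 3 (N + 1) * 2 ^ (N + 1) := by
  calc
    _ = Nat.card {L : Fin (N + 2) → Matrix (Fin 4) (Fin 4) ℤ // GardenRel L} := by
      simp only [forall_isSignedPerm_and_gardenRel_iff]
    _ = Nat.card (orthogonalGroup (Fin 4) ℤ) *
        Nat.card {a : Fin (N + 1) → orthogonalGroup (Fin 4) ℤ // IsCliffordFamily a} := by
      rw [Nat.card_congr (gardenRelEquiv.trans gardenFamilyEquiv), Nat.card_prod]
    _ = Nat.factorial 4 * 2 ^ 4 * (2 * Nat.descFactorial 3 (N + 1) * 2 ^ (N + 1)) := by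
      rw [card_orthogonalGroup_int, card_isCliffordFamily, Fintype.card_fin]
    _ = _ := by
      rw [show Nat.factorial 4 = 24 from rfl]
      ring

theorem stmt10 :
    Nat.card {L : Fin 4 → Matrix (Fin 4) (Fin 4) ℤ // IsAdinkra L} = 36864 :=
  stmt10_general 2
end

section
/- Let A = (L_1,L_2,L_3,L_4) and A' = (L'_1,L'_2,L'_3,L'_4) encode (4,1) valise adinkras with chiralities χ and χ' respectively. Then Σ_{I≠J} trace(L_Iᵀ·L_J·L'_Iᵀ·L'_J), the sum over all ordered pairs of distinct I,J ∈ {1,2,3,4}, equals 2·(1 + χ·χ')·(trace(L_1ᵀ·L_2·L'_1ᵀ·L'_2) + trace(L_1ᵀ·L_3·L'_1ᵀ·L'_3) + trace(L_1ᵀ·L_4·L'_1ᵀ·L'_4)). -/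
/-!
Write `V I J = (L I)ᵀ * L J`. The garden algebra makes `V` antisymmetric with `V I J` inverse to
`V J I`, and makes `V I J * V K M` change sign when two neighbouring indices are exchanged. Hence
the chirality relation `V 0 1 * V 2 3 = -χ` propagates to the three splittings of the index set
into two pairs, where it says that the matrices `V` of complementary pairs agree up to a factor
`± χ`. In `trace (V I J * V' I J)` the sign `±` occurs twice, so the values on complementary pairs
differ by the factor `χ * χ'`.
-/

open Matrix

/-- `Σ_{I≠J} trace(L_Iᵀ·L_J·L'_Iᵀ·L'_J)`, summed over ordered pairs of distinct
`I, J ∈ {1,2,3,4}`; the gadget is `OG(A,A') = -(1/48)` times this quantity. -/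
def gadgetSum (L L' : Fin 4 → Matrix (Fin 4) (Fin 4) ℤ) : ℤ :=
  ∑ I : Fin 4, ∑ J : Fin 4,
    if I ≠ J then Matrix.trace ((L I)ᵀ * L J * (L' I)ᵀ * L' J) else 0

section Holoraumy

variable {ι m m' n R : Type*} [CommRing R] [Fintype m] [Fintype m'] [Fintype n]

/-- The fermionic holoraumy matrix of a family of L-matrices. In the literature it is the
antisymmetrization of `(L I)ᵀ * L J` in `I` and `J`; under the garden algebra the two agree
for `I ≠ J`. -/
def holoraumy (L : ι → Matrix m n R) (I J : ι) : Matrix n n R :=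
  (L I)ᵀ * L J

/-- The contribution of the pair `(I, J)` to the gadget of two families, up to the
normalization `-1/48`. -/
def holoraumyPairing (L : ι → Matrix m n R) (L' : ι → Matrix m' n R) (I J : ι) : R :=
  trace (holoraumy L I J * holoraumy L' I J)

theorem holoraumyPairing_eq_trace (L : ι → Matrix m n R) (L' : ι → Matrix m' n R) (I J : ι) :
    holoraumyPairing L L' I J = trace ((L I)ᵀ * L J * (L' I)ᵀ * L' J) := by
  simp only [holoraumyPairing, holoraumy, Matrix.mul_assoc]

variable [DecidableEq n]

/-- The chirality `χ` of a family of L-matrices relative to the ordering `I, J, K, M` of four of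
its indices; the chirality of a (4,1) valise adinkra is the one relative to `0, 1, 2, 3`. -/
def HasChirality (L : ι → Matrix m n R) (I J K M : ι) (χ : R) : Prop :=
  holoraumy L I J * holoraumy L K M = -(χ • (1 : Matrix n n R))

theorem hasChirality_iff {L : ι → Matrix m n R} {I J K M : ι} {χ : R} :
    HasChirality L I J K M χ ↔
      (L I)ᵀ * L J * (L K)ᵀ * L M = -(χ • (1 : Matrix n n R)) := by
  simp only [HasChirality, holoraumy, Matrix.mul_assoc]

variable [DecidableEq m]

/-- The garden algebra relations over a commutative ring, for rectangular matrices (rows are bosons,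
columns are fermions). The relations for `I = J` are divided by two, so that they keep their
content where `2` is a zero divisor. -/
structure IsGardenFamily_s12 (L : ι → Matrix m n R) : Prop where
  mul_transpose_self (I : ι) : L I * (L I)ᵀ = 1
  transpose_mul_self (I : ι) : (L I)ᵀ * L I = 1
  mul_transpose_swap {I J : ι} (hIJ : I ≠ J) : L I * (L J)ᵀ = -(L J * (L I)ᵀ)
  transpose_mul_swap {I J : ι} (hIJ : I ≠ J) : (L I)ᵀ * L J = -((L J)ᵀ * L I)

namespace IsGardenFamily_s12

variable {L : ι → Matrix m n R} {I J K M : ι}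

theorem holoraumy_swap (h : IsGardenFamily_s12 L) (hIJ : I ≠ J) :
    holoraumy L I J = -holoraumy L J I :=
  h.transpose_mul_swap hIJ

theorem holoraumy_mul_holoraumy_symm (h : IsGardenFamily_s12 L) (I J : ι) :
    holoraumy L I J * holoraumy L J I = 1 := by
  calc (L I)ᵀ * L J * ((L J)ᵀ * L I) = (L I)ᵀ * (L J * (L J)ᵀ) * L I := by
        simp only [Matrix.mul_assoc]
    _ = 1 := by rw [h.mul_transpose_self, Matrix.mul_one, h.transpose_mul_self]

theorem holoraumy_mul_holoraumy_swap (h : IsGardenFamily_s12 L) (hJK : J ≠ K) (I M : ι) :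
    holoraumy L I J * holoraumy L K M = -(holoraumy L I K * holoraumy L J M) := by
  calc (L I)ᵀ * L J * ((L K)ᵀ * L M) = (L I)ᵀ * (L J * (L K)ᵀ) * L M := by
        simp only [Matrix.mul_assoc]
    _ = -((L I)ᵀ * L K * ((L J)ᵀ * L M)) := by
        rw [h.mul_transpose_swap hJK]
        simp only [Matrix.mul_neg, Matrix.neg_mul, Matrix.mul_assoc]

theorem hasChirality_swap_middle (h : IsGardenFamily_s12 L) (hJK : J ≠ K) {χ : R}
    (hχ : HasChirality L I J K M χ) : HasChirality L I K J M (-χ) := by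
  rw [HasChirality, h.holoraumy_mul_holoraumy_swap hJK.symm, hχ, neg_smul]

theorem hasChirality_swap_right (h : IsGardenFamily_s12 L) (hKM : K ≠ M) {χ : R}
    (hχ : HasChirality L I J K M χ) : HasChirality L I J M K (-χ) := by
  rw [HasChirality, h.holoraumy_swap hKM.symm, Matrix.mul_neg, hχ, neg_smul]

theorem holoraumy_eq_smul_of_hasChirality (h : IsGardenFamily_s12 L) (hIJ : I ≠ J) {χ : R}
    (hχ : HasChirality L I J K M χ) : holoraumy L K M = χ • holoraumy L I J := by
  calc holoraumy L K M = holoraumy L J I * (holoraumy L I J * holoraumy L K M) := by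
        rw [← Matrix.mul_assoc, h.holoraumy_mul_holoraumy_symm, Matrix.one_mul]
    _ = χ • -holoraumy L J I := by
        rw [hχ, Matrix.mul_neg, Matrix.mul_smul, Matrix.mul_one, smul_neg]
    _ = χ • holoraumy L I J := by rw [← h.holoraumy_swap hIJ]

variable [DecidableEq m'] {L' : ι → Matrix m' n R}

theorem holoraumyPairing_comm (h : IsGardenFamily_s12 L) (h' : IsGardenFamily_s12 L') (I J : ι) :
    holoraumyPairing L L' I J = holoraumyPairing L L' J I := by
  rcases eq_or_ne I J with rfl | hIJ
  · rfl
  · rw [holoraumyPairing, h.holoraumy_swap hIJ, h'.holoraumy_swap hIJ, neg_mul_neg,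
      holoraumyPairing]

theorem holoraumyPairing_eq_mul_of_hasChirality (h : IsGardenFamily_s12 L) (h' : IsGardenFamily_s12 L')
    (hIJ : I ≠ J) {χ χ' : R} (hχ : HasChirality L I J K M χ) (hχ' : HasChirality L' I J K M χ') :
    holoraumyPairing L L' K M = χ * χ' * holoraumyPairing L L' I J := by
  rw [holoraumyPairing, h.holoraumy_eq_smul_of_hasChirality hIJ hχ,
    h'.holoraumy_eq_smul_of_hasChirality hIJ hχ', smul_mul_smul_comm, trace_smul, smul_eq_mul,
    holoraumyPairing]

end IsGardenFamily_s12

end Holoraumy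

theorem GardenRel.isGardenFamily {d N : ℕ} {L : Fin N → Matrix (Fin d) (Fin d) ℤ}
    (h : GardenRel L) : IsGardenFamily_s12 L where
  mul_transpose_self I := by
    have hII := (h I I).1
    rw [if_pos rfl, ← two_smul ℤ] at hII
    exact smul_right_injective _ two_ne_zero hII
  transpose_mul_self I := by
    have hII := (h I I).2
    rw [if_pos rfl, ← two_smul ℤ] at hII
    exact smul_right_injective _ two_ne_zero hII
  mul_transpose_swap {I J} hIJ := eq_neg_of_add_eq_zero_left ((h I J).1.trans (if_neg hIJ))
  transpose_mul_swap {I J} hIJ := eq_neg_of_add_eq_zero_left ((h I J).2.trans (if_neg hIJ))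

theorem sum_sum_ne_fin_four_of_symm {M : Type*} [AddCommMonoid M] {f : Fin 4 → Fin 4 → M}
    (hf : ∀ i j, f i j = f j i) :
    ∑ i, ∑ j, (if i ≠ j then f i j else 0) =
      2 • ((f 0 1 + f 2 3) + (f 0 2 + f 1 3) + (f 0 3 + f 1 2)) := by
  simp only [ne_eq, ite_not, Fin.sum_univ_four, Fin.isValue, ↓reduceIte, Fin.reduceEq, zero_ne_one,
    one_ne_zero, zero_add, add_zero, hf 1 0, hf 2 0, hf 2 1, hf 3 0, hf 3 1, hf 3 2]
  abel

theorem stmt12_general {m m' n R : Type*} [CommRing R] [Fintype m] [DecidableEq m]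
    [Fintype m'] [DecidableEq m'] [Fintype n] [DecidableEq n]
    {L : Fin 4 → Matrix m n R} {L' : Fin 4 → Matrix m' n R}
    (hL : IsGardenFamily_s12 L) (hL' : IsGardenFamily_s12 L') {χ χ' : R}
    (hchir : (L 0)ᵀ * L 1 * (L 2)ᵀ * L 3 = -(χ • (1 : Matrix n n R)))
    (hchir' : (L' 0)ᵀ * L' 1 * (L' 2)ᵀ * L' 3 = -(χ' • (1 : Matrix n n R))) :
    (∑ I : Fin 4, ∑ J : Fin 4, if I ≠ J then trace ((L I)ᵀ * L J * (L' I)ᵀ * L' J) else 0) =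
      2 * (1 + χ * χ') *
        (trace ((L 0)ᵀ * L 1 * (L' 0)ᵀ * L' 1) +
         trace ((L 0)ᵀ * L 2 * (L' 0)ᵀ * L' 2) +
         trace ((L 0)ᵀ * L 3 * (L' 0)ᵀ * L' 3)) := by
  have h0123 : HasChirality L 0 1 2 3 χ := hasChirality_iff.mpr hchir
  have h0123' : HasChirality L' 0 1 2 3 χ' := hasChirality_iff.mpr hchir'
  have h23 : holoraumyPairing L L' 2 3 = χ * χ' * holoraumyPairing L L' 0 1 :=
    hL.holoraumyPairing_eq_mul_of_hasChirality hL' (by decide) h0123 h0123'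
  have h13 : holoraumyPairing L L' 1 3 = -χ * -χ' * holoraumyPairing L L' 0 2 :=
    hL.holoraumyPairing_eq_mul_of_hasChirality hL' (by decide)
      (hL.hasChirality_swap_middle (by decide) h0123)
      (hL'.hasChirality_swap_middle (by decide) h0123')
  have h12 : holoraumyPairing L L' 1 2 = - -χ * - -χ' * holoraumyPairing L L' 0 3 :=
    hL.holoraumyPairing_eq_mul_of_hasChirality hL' (by decide)
      (hL.hasChirality_swap_middle (by decide) (hL.hasChirality_swap_right (by decide) h0123))
      (hL'.hasChirality_swap_middle (by decide) (hL'.hasChirality_swap_right (by decide) h0123'))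
  simp only [← holoraumyPairing_eq_trace]
  rw [sum_sum_ne_fin_four_of_symm (hL.holoraumyPairing_comm hL'), h23, h13, h12]
  ring

theorem stmt12 (L L' : Fin 4 → Matrix (Fin 4) (Fin 4) ℤ)
    (hL : IsAdinkra L) (hL' : IsAdinkra L')
    (χ χ' : ℤ) (hχ : χ = 1 ∨ χ = -1) (hχ' : χ' = 1 ∨ χ' = -1)
    (hchir : (L 0)ᵀ * L 1 * (L 2)ᵀ * L 3 = -(χ • (1 : Matrix (Fin 4) (Fin 4) ℤ)))
    (hchir' : (L' 0)ᵀ * L' 1 * (L' 2)ᵀ * L' 3 = -(χ' • (1 : Matrix (Fin 4) (Fin 4) ℤ))) :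
    gadgetSum L L' =
      2 * (1 + χ * χ') *
        (Matrix.trace ((L 0)ᵀ * L 1 * (L' 0)ᵀ * L' 1) +
         Matrix.trace ((L 0)ᵀ * L 2 * (L' 0)ᵀ * L' 2) +
         Matrix.trace ((L 0)ᵀ * L 3 * (L' 0)ᵀ * L' 3)) :=
  stmt12_general hL.2.isGardenFamily hL'.2.isGardenFamily hchir hchir'
end
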